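/- arXiv:1206.1100 — 3 statements merged into one kernel-verified Lean document; each statement's English description precedes it below -/
import Mathlib

section
/- For every point τ₀ = x₀ + iy₀ ∈ ℍ there exists an open neighborhood N ⊆ ℍ of τ₀ such that for every [a,b,c] ∈ 𝒬_D with a|τ₀|² + bx₀ + c ≠ 0 and every τ = x + iy ∈ N, one has sgn(a|τ|² + bx + c) = sgn(a|τ₀|² + bx₀ + c) ≠ 0. -/
noncomputable section

open MeasureTheory

/-- The set of integral binary quadratic forms `[a,b,c]` of discriminant `D`. -/
def QD (D : ℤ) : Set (ℤ × ℤ × ℤ) := {q | q.2.1 ^ 2 - 4 * q.1 * q.2.2 = D}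

/-- `Q(τ,1) = a τ² + b τ + c`. -/
def Qval (q : ℤ × ℤ × ℤ) (τ : ℂ) : ℂ :=
  (q.1 : ℂ) * τ ^ 2 + (q.2.1 : ℂ) * τ + (q.2.2 : ℂ)

/-- `a|τ|² + b x + c` where `τ = x + iy`. -/
def Qell (q : ℤ × ℤ × ℤ) (τ : ℂ) : ℝ :=
  (q.1 : ℝ) * Complex.normSq τ + (q.2.1 : ℝ) * τ.re + (q.2.2 : ℝ)

/-- `ψ(v) = (1/2) ∫₀ᵛ u^(k-3/2) (1-u)^(-1/2) du`. -/
def psi (k : ℕ) (v : ℝ) : ℝ :=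
  (1 / 2) * ∫ u in (0:ℝ)..v, u ^ ((k : ℝ) - 3 / 2) * (1 - u) ^ (-(1:ℝ) / 2)

/-- real power of the integer `D`, as a complex number. -/
def Dpow (D : ℤ) (e : ℝ) : ℂ := (((D : ℝ) ^ e : ℝ) : ℂ)

/-- The summand of the series defining `F_{1-k,D}`. -/
def Fsummand (k : ℕ) (D : ℤ) (τ : ℂ) (q : ℤ × ℤ × ℤ) : ℂ :=
  ((Real.sign (Qell q τ) : ℝ) : ℂ) * Qval q τ ^ (k - 1) *
    ((psi k ((D : ℝ) * τ.im ^ 2 / Complex.normSq (Qval q τ)) : ℝ) : ℂ)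

/-- `F_{1-k,D}`. -/
def F (k : ℕ) (D : ℤ) (τ : ℂ) : ℂ :=
  (Dpow D (1 / 2 - (k : ℝ)) / (((Nat.choose (2 * k - 2) (k - 1) : ℝ) * Real.pi : ℝ) : ℂ)) *
    ∑' q : QD D, Fsummand k D τ (q : ℤ × ℤ × ℤ)

/-- `f_{k,D}`. -/
def fkD (k : ℕ) (D : ℤ) (τ : ℂ) : ℂ :=
  (Dpow D ((k : ℝ) - 1 / 2) / (((Nat.choose (2 * k - 2) (k - 1) : ℝ) * Real.pi : ℝ) : ℂ)) *
    ∑' q : QD D, Qval (q : ℤ × ℤ × ℤ) τ ^ (-(k : ℤ))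

/-- Action of `SL₂(ℤ)` on binary quadratic forms: `(Q ∘ γ)(X,Y) = Q(pX+qY, rX+sY)`. -/
def QAct (q : ℤ × ℤ × ℤ) (γ : Matrix.SpecialLinearGroup (Fin 2) ℤ) : ℤ × ℤ × ℤ :=
  (q.1 * (γ.1 0 0) ^ 2 + q.2.1 * (γ.1 0 0) * (γ.1 1 0) + q.2.2 * (γ.1 1 0) ^ 2,
   2 * q.1 * (γ.1 0 0) * (γ.1 0 1) + q.2.1 * ((γ.1 0 0) * (γ.1 1 1) + (γ.1 0 1) * (γ.1 1 0))
     + 2 * q.2.2 * (γ.1 1 0) * (γ.1 1 1),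
   q.1 * (γ.1 0 1) ^ 2 + q.2.1 * (γ.1 0 1) * (γ.1 1 1) + q.2.2 * (γ.1 1 1) ^ 2)

/-- A narrow class: an orbit of the `SL₂(ℤ)`-action on `QD D`. -/
def IsNarrowClass (D : ℤ) (𝒜 : Set (ℤ × ℤ × ℤ)) : Prop :=
  ∃ q₀ ∈ QD D, 𝒜 = {q | ∃ γ : Matrix.SpecialLinearGroup (Fin 2) ℤ, QAct q₀ γ = q}

/-- `F_{1-k,D,𝒜}`. -/
def FA (k : ℕ) (D : ℤ) (𝒜 : Set (ℤ × ℤ × ℤ)) (τ : ℂ) : ℂ :=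
  ((-1 : ℂ) ^ k * Dpow D (1 / 2 - (k : ℝ)) /
      (((Nat.choose (2 * k - 2) (k - 1) : ℝ) * Real.pi : ℝ) : ℂ)) *
    ∑' q : 𝒜, Fsummand k D τ (q : ℤ × ℤ × ℤ)

/-- `f_{k,D,𝒜}`. -/
def fA (k : ℕ) (D : ℤ) (𝒜 : Set (ℤ × ℤ × ℤ)) (τ : ℂ) : ℂ :=
  ((-1 : ℂ) ^ k * Dpow D ((k : ℝ) - 1 / 2) /
      (((Nat.choose (2 * k - 2) (k - 1) : ℝ) * Real.pi : ℝ) : ℂ)) *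
    ∑' q : 𝒜, Qval (q : ℤ × ℤ × ℤ) τ ^ (-(k : ℤ))

/-- Partial derivative in the real direction `x`. -/
def dxx (G : ℂ → ℂ) (τ : ℂ) : ℂ :=
  deriv (fun x : ℝ => G ((x : ℂ) + (τ.im : ℂ) * Complex.I)) τ.re

/-- Partial derivative in the imaginary direction `y`. -/
def dyy (G : ℂ → ℂ) (τ : ℂ) : ℂ :=
  deriv (fun y : ℝ => G ((τ.re : ℂ) + (y : ℂ) * Complex.I)) τ.im

/-- Wirtinger derivative `∂/∂τ̄ = (1/2)(∂/∂x + i ∂/∂y)`. -/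
def wirDbar (G : ℂ → ℂ) (τ : ℂ) : ℂ := (dxx G τ + Complex.I * dyy G τ) / 2

/-- Wirtinger derivative `∂/∂τ = (1/2)(∂/∂x - i ∂/∂y)`. -/
def wirD (G : ℂ → ℂ) (τ : ℂ) : ℂ := (dxx G τ - Complex.I * dyy G τ) / 2

/-- The operator `ξ_{2-2k}(G)(τ) = 2 i y^{2-2k} conj(∂G/∂τ̄)`. -/
def xiOp (k : ℕ) (G : ℂ → ℂ) (τ : ℂ) : ℂ :=
  2 * Complex.I * (τ.im : ℂ) ^ ((2 : ℤ) - 2 * (k : ℤ)) * (starRingEnd ℂ) (wirDbar G τ)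

/-- The operator `𝒟 = (1/(2πi)) ∂/∂τ`. -/
def Dop (G : ℂ → ℂ) : ℂ → ℂ := fun τ => (1 / (2 * (Real.pi : ℂ) * Complex.I)) * wirD G τ

/-- The weight `2-2k` hyperbolic Laplacian. -/
def DeltaOp (k : ℕ) (G : ℂ → ℂ) (τ : ℂ) : ℂ :=
  -(τ.im : ℂ) ^ 2 * (dxx (fun z => dxx G z) τ + dyy (fun z => dyy G z) τ)
    + Complex.I * ((2 : ℂ) - 2 * (k : ℂ)) * (τ.im : ℂ) * (dxx G τ + Complex.I * dyy G τ)

/-- `φ(v) = ∫₀ᵛ sin(u)^{2k-2} du`. -/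
def phi (k : ℕ) (v : ℝ) : ℝ := ∫ u in (0:ℝ)..v, Real.sin u ^ (2 * k - 2)

/-- `φ̂(τ) = τ^{k-1} sgn(x) φ(arctan|y/x|)`, with value `0` when `x = 0`. -/
def phiHat (k : ℕ) (τ : ℂ) : ℂ :=
  τ ^ (k - 1) * ((Real.sign τ.re : ℝ) : ℂ) *
    ((phi k (Real.arctan |τ.im / τ.re|) : ℝ) : ℂ)

/-- The non-holomorphic Eichler integral
`f^*(τ) = (2i)^{1-2k} ∫_{-τ̄}^{i∞} conj(f(-z̄)) (z+τ)^{2k-2} dz`,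
parametrized along the vertical path `z = -τ̄ + it`, `t ∈ (0,∞)`. -/
def fstar (k : ℕ) (f : ℂ → ℂ) (τ : ℂ) : ℂ :=
  (2 * Complex.I) ^ ((1 : ℤ) - 2 * (k : ℤ)) * Complex.I *
    ∫ t in Set.Ioi (0 : ℝ), (starRingEnd ℂ) (f (τ + (t : ℂ) * Complex.I)) *
      (((2 * τ.im + t : ℝ) : ℂ) * Complex.I) ^ (2 * k - 2)

/-- `a : ℕ → ℂ` is the sequence of Fourier coefficients of `f` (with `a n` the
coefficient of `e^{2πi(n+1)τ}`). -/
def HasFourier (a : ℕ → ℂ) (f : ℂ → ℂ) : Prop :=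
  ∀ τ : ℂ, 0 < τ.im →
    f τ = ∑' n : ℕ, a n * Complex.exp (2 * (Real.pi : ℂ) * Complex.I * ((n : ℂ) + 1) * τ)

/-- The holomorphic Eichler integral `ℰ_f(τ) = ∑_{n≥1} (a_n/n^{2k-1}) e^{2πinτ}`. -/
def EichlerE (k : ℕ) (a : ℕ → ℂ) (τ : ℂ) : ℂ :=
  ∑' n : ℕ, a n / ((n : ℂ) + 1) ^ (2 * k - 1) *
    Complex.exp (2 * (Real.pi : ℂ) * Complex.I * ((n : ℂ) + 1) * τ)

/-- `r_{a,b}(𝒜) = 1_{[Q_{a,b} ∈ 𝒜]} + (-1)^k 1_{[-Q_{a,b} ∈ 𝒜]}`. -/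
def rab (k : ℕ) (D : ℤ) (𝒜 : Set (ℤ × ℤ × ℤ)) (a b : ℤ) : ℝ :=
  Set.indicator 𝒜 1 (a, b, (b ^ 2 - D) / (4 * a)) +
    (-1 : ℝ) ^ k * Set.indicator 𝒜 1 (-a, -b, -((b ^ 2 - D) / (4 * a)))

/-- The constant `c_∞(𝒜)`. -/
def cInftyA (k : ℕ) (D : ℤ) (𝒜 : Set (ℤ × ℤ × ℤ)) : ℝ :=
  -(1 / (2 ^ (2 * k - 2) * (2 * (k : ℝ) - 1) * (Nat.choose (2 * k - 2) (k - 1) : ℝ))) *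
    ∑' n : ℕ, (1 / ((n : ℝ) + 1) ^ k) *
      ∑ b ∈ Finset.range (2 * (n + 1)),
        if (4 * ((n : ℤ) + 1)) ∣ ((b : ℤ) ^ 2 - D) then rab k D 𝒜 ((n : ℤ) + 1) (b : ℤ) else 0

/-- The constant `c_∞`. -/
def cInfty (k : ℕ) (D : ℤ) : ℝ :=
  -(1 / (2 ^ (2 * k - 3) * (2 * (k : ℝ) - 1) * (Nat.choose (2 * k - 2) (k - 1) : ℝ))) *
    ∑' n : ℕ, (1 / ((n : ℝ) + 1) ^ k) *
      (((Finset.range (2 * (n + 1))).filter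
        (fun b : ℕ => (4 * ((n : ℤ) + 1)) ∣ ((b : ℤ) ^ 2 - D))).card : ℝ)

/-- The weight `2-2k` Hecke operator `T_p`. -/
def heckeT (k : ℕ) (p : ℕ) (g : ℂ → ℂ) (τ : ℂ) : ℂ :=
  (p : ℂ) ^ ((1 : ℤ) - 2 * (k : ℤ)) * g ((p : ℂ) * τ) +
    (p : ℂ)⁻¹ * ∑ r ∈ Finset.range p, g ((τ + (r : ℂ)) / (p : ℂ))

open scoped Classical in
/-- The symbol `(D|p)`. -/
def legSym (D : ℤ) (p : ℕ) : ℤ :=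
  if (p : ℤ) ∣ D then 0
  else if p = 2 then (if D % 8 = 1 ∨ D % 8 = 7 then 1 else -1)
  else if ∃ m : ℤ, (p : ℤ) ∣ (m ^ 2 - D) then 1 else -1

/-- Primitive forms of discriminant `D`. -/
def QDprim (D : ℤ) : Set (ℤ × ℤ × ℤ) :=
  {q | q.2.1 ^ 2 - 4 * q.1 * q.2.2 = D ∧ Int.gcd q.1 (Int.gcd q.2.1 q.2.2) = 1}

/-- `F'_{1-k,D}`: the sum over primitive forms, with normalization `D^{(1-k)/2}`. -/
def Fprim (k : ℕ) (D : ℤ) (τ : ℂ) : ℂ :=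
  (Dpow D ((1 - (k : ℝ)) / 2) / (((Nat.choose (2 * k - 2) (k - 1) : ℝ) * Real.pi : ℝ) : ℂ)) *
    ∑' q : QDprim D, Fsummand k D τ (q : ℤ × ℤ × ℤ)

/-- The root `η_Q = (-b+√D)/(2a)`. -/
def etaQ (D : ℤ) (q : ℤ × ℤ × ℤ) : ℝ := (-(q.2.1 : ℝ) + Real.sqrt (D : ℝ)) / (2 * (q.1 : ℝ))

/-- The root `η'_Q = (-b-√D)/(2a)`. -/
def etaQ' (D : ℤ) (q : ℤ × ℤ × ℤ) : ℝ := (-(q.2.1 : ℝ) - Real.sqrt (D : ℝ)) / (2 * (q.1 : ℝ))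

/-- The scaling matrix `A_Q`. -/
def AQ (D : ℤ) (q : ℤ × ℤ × ℤ) : Matrix (Fin 2) (Fin 2) ℝ :=
  (1 / Real.sqrt |etaQ D q - etaQ' D q|) •
    !![1, -(etaQ' D q);
       -(Real.sign (etaQ D q - etaQ' D q)), Real.sign (etaQ D q - etaQ' D q) * etaQ D q]

/-- Real matrix associated to an element of `SL₂(ℤ)`. -/
def toR (γ : Matrix.SpecialLinearGroup (Fin 2) ℤ) : Matrix (Fin 2) (Fin 2) ℝ :=
  γ.1.map (fun n => (n : ℝ))

/-- Möbius action of a real `2×2` matrix on `ℂ`. -/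
def moeb (g : Matrix (Fin 2) (Fin 2) ℝ) (τ : ℂ) : ℂ :=
  ((g 0 0 : ℝ) * τ + (g 0 1 : ℝ)) / ((g 1 0 : ℝ) * τ + (g 1 1 : ℝ))

/-- Automorphy factor `j(g,τ) = cτ + d`. -/
def jfac (g : Matrix (Fin 2) (Fin 2) ℝ) (τ : ℂ) : ℂ :=
  ((g 1 0 : ℝ) : ℂ) * τ + ((g 1 1 : ℝ) : ℂ)

/-- `n`-th period `r_n(f) = ∫₀^∞ f(it) tⁿ dt`. -/
def periodR (f : ℂ → ℂ) (n : ℕ) : ℂ :=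
  ∫ t in Set.Ioi (0 : ℝ), f ((t : ℂ) * Complex.I) * (t : ℂ) ^ n

/-- The even period polynomial `r⁺(f;X)`. -/
def rPlus (k : ℕ) (f : ℂ → ℂ) : Polynomial ℂ :=
  ∑ m ∈ Finset.range k,
    Polynomial.C ((-1 : ℂ) ^ m * (Nat.choose (2 * k - 2) (2 * m) : ℂ) * periodR f (2 * m)) *
      Polynomial.X ^ (2 * k - 2 - 2 * m)

end

lemma finite_int_box (C : ℝ) :
    {q : ℤ × ℤ × ℤ | |(q.1 : ℝ)| ≤ C ∧ |(q.2.1 : ℝ)| ≤ C ∧ |(q.2.2 : ℝ)| ≤ C}.Finite := by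
  have h1 : (Set.Icc (-⌈C⌉) ⌈C⌉ : Set ℤ).Finite := Set.finite_Icc _ _
  have key : ∀ n : ℤ, |(n : ℝ)| ≤ C → n ∈ Set.Icc (-⌈C⌉) ⌈C⌉ := by
    intro n hn
    have h2 : |(n : ℝ)| ≤ (⌈C⌉ : ℝ) := hn.trans (Int.le_ceil C)
    have h3 : |n| ≤ ⌈C⌉ := by exact_mod_cast h2
    exact abs_le.mp h3
  refine (h1.prod (h1.prod h1)).subset ?_
  rintro ⟨a, b, c⟩ ⟨ha, hb, hc⟩
  exact ⟨key _ ha, key _ hb, key _ hc⟩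

lemma qell_continuous (q : ℤ × ℤ × ℤ) : Continuous (Qell q) := by
  unfold Qell
  have := Complex.continuous_normSq
  have := Complex.continuous_re
  fun_prop

/-- `D = (2ax+b)² + 4a²y² - 4a·Qell`. -/
lemma disc_identity {D : ℤ} {q : ℤ × ℤ × ℤ} (hq : q ∈ QD D) (τ : ℂ) :
    (D : ℝ) = (2 * q.1 * τ.re + q.2.1) ^ 2 + 4 * (q.1 : ℝ) ^ 2 * τ.im ^ 2
      - 4 * q.1 * Qell q τ := by
  have h : q.2.1 ^ 2 - 4 * q.1 * q.2.2 = D := hq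
  rw [← h, Qell, Complex.normSq_apply]
  push_cast
  ring

lemma zero_bound {D : ℤ} {q : ℤ × ℤ × ℤ} (hq : q ∈ QD D) {τ : ℂ} {y R : ℝ} (hy : 0 < y)
    (hyτ : y ≤ τ.im) (hR : ‖τ‖ ≤ R) (h0 : Qell q τ = 0) :
    |(q.1 : ℝ)| ≤ √D / y ∧ |(q.2.1 : ℝ)| ≤ √D + 2 * (√D / y) * R ∧
      |(q.2.2 : ℝ)| ≤ √D / y * R ^ 2 + (√D + 2 * (√D / y) * R) * R := by
  have hid := disc_identity hq τ
  rw [h0] at hid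
  have hR0 : 0 ≤ R := (norm_nonneg τ).trans hR
  have hre : |τ.re| ≤ R := (Complex.abs_re_le_norm τ).trans hR
  have hA : |(q.1 : ℝ)| ≤ √D / y := by
    rw [le_div_iff₀ hy]
    apply Real.le_sqrt_of_sq_le
    rw [mul_pow, sq_abs]
    have h1 : y ^ 2 ≤ τ.im ^ 2 := by gcongr
    nlinarith [sq_nonneg (2 * (q.1 : ℝ) * τ.re + q.2.1), sq_nonneg (q.1 : ℝ),
      mul_le_mul_of_nonneg_left h1 (sq_nonneg (q.1 : ℝ)), mul_nonneg (sq_nonneg (q.1 : ℝ)) (sq_nonneg y)]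
  have hM : |2 * (q.1 : ℝ) * τ.re + q.2.1| ≤ √D := by
    apply Real.le_sqrt_of_sq_le
    rw [sq_abs]
    nlinarith [mul_nonneg (sq_nonneg (q.1 : ℝ)) (sq_nonneg τ.im)]
  have hAR : |(q.1 : ℝ)| * |τ.re| ≤ √D / y * R := by gcongr
  have hB : |(q.2.1 : ℝ)| ≤ √D + 2 * (√D / y) * R := by
    have h1 : (q.2.1 : ℝ) = (2 * (q.1 : ℝ) * τ.re + q.2.1) - 2 * (q.1 * τ.re) := by ring
    rw [h1]
    refine (abs_sub _ _).trans ?_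
    rw [abs_mul 2, abs_mul (q.1 : ℝ), abs_of_pos (by norm_num : (0:ℝ) < 2)]
    linarith
  refine ⟨hA, hB, ?_⟩
  have h1 : (q.2.2 : ℝ) = -((q.1 : ℝ) * ‖τ‖ ^ 2 + q.2.1 * τ.re) := by
    rw [Qell, Complex.normSq_eq_norm_sq] at h0
    linarith
  rw [h1, abs_neg]
  refine (abs_add_le _ _).trans ?_
  rw [abs_mul, abs_mul, abs_of_nonneg (sq_nonneg ‖τ‖)]
  gcongr

theorem stmt2 (D : ℤ) (hD : 0 < D) (hD4 : D % 4 = 0 ∨ D % 4 = 1)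
    (hDsq : ¬∃ m : ℤ, m ^ 2 = D) (τ₀ : ℂ) (hτ₀ : 0 < τ₀.im) :
    ∃ N : Set ℂ, IsOpen N ∧ τ₀ ∈ N ∧ N ⊆ {τ : ℂ | 0 < τ.im} ∧
      ∀ q ∈ QD D, Qell q τ₀ ≠ 0 →
        ∀ τ ∈ N, Real.sign (Qell q τ) = Real.sign (Qell q τ₀) ∧ Real.sign (Qell q τ₀) ≠ 0 := by
  have hr : 0 < τ₀.im / 2 := by linarith
  set B := Metric.ball τ₀ (τ₀.im / 2) with hB
  have him : ∀ τ ∈ B, τ₀.im / 2 ≤ τ.im ∧ ‖τ‖ ≤ ‖τ₀‖ + τ₀.im / 2 := by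
    intro τ hτ
    have h1 : ‖τ - τ₀‖ < τ₀.im / 2 := by simpa [hB, dist_eq_norm] using hτ
    constructor
    · have h2 := (Complex.abs_im_le_norm (τ - τ₀)).trans h1.le
      rw [Complex.sub_im] at h2
      linarith [(abs_le.mp h2).1]
    · have h2 := norm_add_le τ₀ (τ - τ₀)
      rw [add_sub_cancel] at h2
      linarith
  set S : Set (ℤ × ℤ × ℤ) := {q | q ∈ QD D ∧ Qell q τ₀ ≠ 0 ∧ ∃ τ ∈ B, Qell q τ = 0} with hS
  have hSfin : S.Finite := by
    set y := τ₀.im / 2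
    set R := ‖τ₀‖ + y
    refine (finite_int_box (max (√D / y) (max (√D + 2 * (√D / y) * R)
      (√D / y * R ^ 2 + (√D + 2 * (√D / y) * R) * R)))).subset ?_
    rintro q ⟨hq, -, τ, hτ, h0⟩
    obtain ⟨h1, h2, h3⟩ := zero_bound hq hr (him τ hτ).1 (him τ hτ).2 h0
    exact ⟨h1.trans (le_max_left _ _), h2.trans ((le_max_left _ _).trans (le_max_right _ _)),
      h3.trans ((le_max_right _ _).trans (le_max_right _ _))⟩
  refine ⟨B ∩ ⋂ q ∈ S, {τ | 0 < Qell q τ * Qell q τ₀}, ?_, ?_, ?_, ?_⟩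
  · refine Metric.isOpen_ball.inter (hSfin.isOpen_biInter fun q _ => ?_)
    exact isOpen_lt continuous_const ((qell_continuous q).mul continuous_const)
  · refine ⟨Metric.mem_ball_self hr, ?_⟩
    simp only [Set.mem_iInter]
    intro q hq
    exact mul_self_pos.mpr hq.2.1
  · rintro τ ⟨hτ, -⟩
    exact hr.trans_le (him τ hτ).1
  · rintro q hq hne τ ⟨hτ, hτS⟩
    have hpos : 0 < Qell q τ * Qell q τ₀ := by
      by_cases hqS : q ∈ S
      · simp only [Set.mem_iInter] at hτS
        exact hτS q hqS
      · by_contra hcon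
        apply hqS
        have hmem := (convex_ball τ₀ (τ₀.im / 2)).isPreconnected.intermediate_value hτ
          (Metric.mem_ball_self hr)
          ((qell_continuous q).mul (continuous_const (y := Qell q τ₀))).continuousOn
          ⟨not_lt.mp hcon, (mul_self_pos.mpr hne).le⟩
        obtain ⟨σ, hσ, h0⟩ := hmem
        exact ⟨hq, hne, σ, hσ, (mul_eq_zero.mp h0).resolve_right hne⟩
    rcases lt_or_gt_of_ne hne with h | h
    · have h' : Qell q τ < 0 := by
        by_contra hc
        nlinarith [not_lt.mp hc]
      rw [Real.sign_of_neg h, Real.sign_of_neg h']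
      norm_num
    · have h' : 0 < Qell q τ := by
        by_contra hc
        nlinarith [not_lt.mp hc]
      rw [Real.sign_of_pos h, Real.sign_of_pos h']
      norm_num
end

section
/- For every τ ∈ E_D, the one-sided limit lim_{w→0⁺} (F_{1−k,D,𝒜}(τ + iw) + F_{1−k,D,𝒜}(τ − iw)) (w real, w > 0) exists and F_{1−k,D,𝒜}(τ) = (1/2)·lim_{w→0⁺} (F_{1−k,D,𝒜}(τ + iw) + F_{1−k,D,𝒜}(τ − iw)). -/
theorem aux_pow8 (e : ℕ) : (e+1)^3 ≤ 8^e := by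
  have : e + 1 ≤ 2^e := Nat.lt_two_pow_self
  calc (e+1)^3 ≤ (2^e)^3 := Nat.pow_le_pow_left this 3
    _ = 8^e := by rw [← pow_mul, mul_comm, pow_mul]; norm_num

theorem aux_pow2 (e : ℕ) : (e+1)^3 ≤ 8 * 2^e := by
  rcases lt_or_ge e 4 with h | h
  · interval_cases e <;> norm_num
  · induction e, h using Nat.le_induction with
    | base => norm_num
    | succ n hn ih =>
      rw [pow_succ 2 n]
      have : (n+1+1)^3 ≤ 2 * (n+1)^3 := by
        obtain ⟨m, rfl⟩ := Nat.exists_eq_add_of_le hn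
        ring_nf
        nlinarith [sq_nonneg m, Nat.zero_le (m^3)]
      omega

theorem aux_card_divisors (n : ℕ) (hn : n ≠ 0) : n.divisors.card ^ 3 ≤ 8^8 * n := by
  rw [Nat.card_divisors hn, ← Finset.prod_pow]
  calc ∏ p ∈ n.primeFactors, (n.factorization p + 1)^3
      ≤ ∏ p ∈ n.primeFactors, ((if p < 8 then 8 else 1) * p ^ n.factorization p) := by
        apply Finset.prod_le_prod' 
        intro p hp
        have hp2 := (Nat.prime_of_mem_primeFactors hp).two_le
        split_ifs with h
        · exact (aux_pow2 _).trans (Nat.mul_le_mul_left _ (Nat.pow_le_pow_left hp2 _))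
        · rw [one_mul]
          exact (aux_pow8 _).trans (Nat.pow_le_pow_left (not_lt.mp h) _)
    _ = (∏ p ∈ n.primeFactors, (if p < 8 then 8 else 1)) * n := by
        rw [Finset.prod_mul_distrib]
        congr 1
        exact Nat.prod_factorization_pow_eq_self hn
    _ ≤ 8^8 * n := by
        apply Nat.mul_le_mul_right
        rw [← Finset.prod_filter, Finset.prod_const]
        apply Nat.pow_le_pow_right (by norm_num)
        calc _ ≤ (Finset.range 8).card := Finset.card_le_card (by intro p; simp)
          _ = 8 := by simp


open MeasureTheory
theorem aux_int1 (v : ℝ) : IntervalIntegrable (fun u : ℝ => (1 - u) ^ (-(1:ℝ) / 2)) volume 0 v := by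
  have := (intervalIntegral.intervalIntegrable_rpow' (r := -(1:ℝ)/2) (a := 1 - 0) (b := 1 - v) (by norm_num)).comp_sub_left 1
  simpa using this

theorem aux_int2 (k : ℕ) (hk : 2 ≤ k) (v : ℝ) : IntervalIntegrable (fun u : ℝ => u ^ ((k : ℝ) - 3 / 2) * (1 - u) ^ (-(1:ℝ) / 2)) volume 0 v := by
  have hk' : (2:ℝ) ≤ k := by exact_mod_cast hk
  apply (aux_int1 v).continuousOn_mul
  exact (Real.continuous_rpow_const (by linarith)).continuousOn

theorem aux_int3 (v : ℝ) (h0 : 0 ≤ v) (h1 : v ≤ 1) :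
    ∫ u in (0:ℝ)..v, (1 - u) ^ (-(1:ℝ) / 2) ≤ 2 * v := by
  rw [intervalIntegral.integral_comp_sub_left (fun u : ℝ => u ^ (-(1:ℝ) / 2)) 1,
    integral_rpow (Or.inl (by norm_num))]
  norm_num
  have : (1 - v) ≤ (1-v)^(1/2:ℝ) := by
    rw [← Real.sqrt_eq_rpow]
    apply Real.le_sqrt_of_sq_le
    nlinarith
  linarith

theorem aux_psi_nonneg (k : ℕ) (v : ℝ) (h0 : 0 ≤ v) (h1 : v ≤ 1) : 0 ≤ psi k v := by
  unfold psi
  have := intervalIntegral.integral_nonneg (μ := volume) (f := fun u : ℝ => u ^ ((k : ℝ) - 3 / 2) * (1 - u) ^ (-(1:ℝ) / 2)) h0 (by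
    intro u hu
    have : 0 ≤ 1 - u := by linarith [hu.2]
    have := hu.1
    positivity)
  linarith

theorem aux_psi_le (k : ℕ) (hk : 2 ≤ k) (s : ℝ) (h0 : 0 < s) (h1 : s ≤ 1) :
    psi k (s^2) ≤ s ^ (2 * k - 1) := by
  have hk' : (2:ℝ) ≤ k := by exact_mod_cast hk
  have hs1 : s^2 ≤ 1 := by nlinarith
  have hs0 : 0 < s^2 := by positivity
  have h := intervalIntegral.integral_mono_on (μ := volume) hs0.le (aux_int2 k hk (s^2))
    ((aux_int1 (s^2)).const_mul ((s^2) ^ ((k : ℝ) - 3 / 2))) (by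
      intro u hu
      have : 0 ≤ 1 - u := by linarith [hu.2]
      apply mul_le_mul_of_nonneg_right _ (by positivity)
      exact Real.rpow_le_rpow hu.1 hu.2 (by linarith))
  rw [intervalIntegral.integral_const_mul] at h
  have h3 := aux_int3 (s^2) hs0.le hs1
  have e : (s^2) ^ ((k : ℝ) - 3 / 2) * s^2 = s ^ (2 * k - 1) := by
    rw [← Real.rpow_add_one hs0.ne', ← Real.rpow_natCast s 2, ← Real.rpow_mul h0.le,
      ← Real.rpow_natCast]
    congr 1
    push_cast [show 1 ≤ 2 * k by omega]
    ring
  have hp : 0 ≤ (s^2) ^ ((k : ℝ) - 3 / 2) := by positivity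
  unfold psi
  have := mul_le_mul_of_nonneg_left h3 hp
  rw [← e]
  linarith

theorem aux_psi_cont (k : ℕ) (hk : 2 ≤ k) : Continuous (psi k) := by
  unfold psi
  apply Continuous.mul continuous_const
  apply intervalIntegral.continuous_primitive
  intro a b
  exact (aux_int2 k hk a).symm.trans (aux_int2 k hk b)

theorem aux_sum1 (D : ℤ) (hDsq : ¬∃ m : ℤ, m ^ 2 = D) (b : ℤ) :
    ∃ s : Finset ℤ, (∀ a, a ∣ b^2 - D ↔ a ∈ s) ∧
      (s.card : ℝ) ≤ 512 * ((1 + |(D:ℝ)|) * (1 + (b:ℝ)^2)) ^ (1/3:ℝ) := by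
  have hm : b^2 - D ≠ 0 := fun h => hDsq ⟨b, by linarith⟩
  set n := (b^2-D).natAbs with hn
  have hn0 : n ≠ 0 := by simpa [hn] using hm
  refine ⟨n.divisors.image (fun x : ℕ => (x:ℤ)) ∪ n.divisors.image (fun x : ℕ => -(x:ℤ)), ?_, ?_⟩
  · intro a
    rw [← Int.natAbs_dvd_natAbs, ← hn]
    simp only [Finset.mem_union, Finset.mem_image, Nat.mem_divisors]
    constructor
    · intro h
      rcases Int.natAbs_eq a with h' | h'
      · exact Or.inl ⟨a.natAbs, ⟨h, hn0⟩, h'.symm⟩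
      · exact Or.inr ⟨a.natAbs, ⟨h, hn0⟩, h'.symm⟩
    · rintro (⟨x, hx, rfl⟩ | ⟨x, hx, rfl⟩)
      · simpa using hx.1
      · simpa using hx.1
  · have hc := (Finset.card_union_le (n.divisors.image (fun x : ℕ => (x:ℤ))) (n.divisors.image (fun x : ℕ => -(x:ℤ)))).trans (add_le_add Finset.card_image_le Finset.card_image_le)
    have hc' : ((n.divisors.image (fun x : ℕ => (x:ℤ)) ∪ n.divisors.image (fun x : ℕ => -(x:ℤ))).card : ℝ) ≤ n.divisors.card + n.divisors.card := by exact_mod_cast hc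
    have hd : (n.divisors.card : ℝ)^3 ≤ 8^8 * n := by exact_mod_cast aux_card_divisors n hn0
    have hnb : (n:ℝ) ≤ (1 + |(D:ℝ)|) * (1 + (b:ℝ)^2) := by
      have : (n:ℝ) = |(b:ℝ)^2 - D| := by
        rw [hn, Nat.cast_natAbs]; push_cast; rfl
      rw [this]
      have := abs_sub ((b:ℝ)^2) (D:ℝ)
      rw [abs_of_nonneg (sq_nonneg (b:ℝ))] at this
      nlinarith [abs_nonneg (D:ℝ), sq_nonneg (b:ℝ), mul_nonneg (abs_nonneg (D:ℝ)) (sq_nonneg (b:ℝ))]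
    set X := (1 + |(D:ℝ)|) * (1 + (b:ℝ)^2)
    have hX : 0 ≤ X := le_trans (by positivity) hnb
    have : (n.divisors.card : ℝ) ≤ 256 * X ^ (1/3:ℝ) := by
      apply le_of_pow_le_pow_left₀ (n := 3) (by norm_num) (by positivity)
      rw [mul_pow, ← Real.rpow_natCast (X ^ (1/3:ℝ)), ← Real.rpow_mul hX]
      norm_num
      linarith
    linarith

theorem aux_sum2 : Summable (fun b : ℤ => (1 + (b:ℝ)^2) ^ (-(2/3):ℝ)) := by
  have h := Real.summable_abs_int_rpow (b := 4/3) (by norm_num)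
  refine Summable.of_norm_bounded_eventually h ?_
  have : ∀ᶠ b : ℤ in Filter.cofinite, b ≠ 0 :=
    Filter.eventually_cofinite_ne 0
  filter_upwards [this] with b hb
  have hb' : 0 < |(b:ℝ)| := by simpa using hb
  rw [Real.norm_of_nonneg (by positivity)]
  calc (1 + (b:ℝ)^2) ^ (-(2/3):ℝ) ≤ (|(b:ℝ)|^2) ^ (-(2/3):ℝ) := by
        apply Real.rpow_le_rpow_of_nonpos (by positivity) _ (by norm_num)
        rw [sq_abs]; linarith
    _ = _ := by
        rw [← Real.rpow_natCast, ← Real.rpow_mul hb'.le]; norm_num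

theorem aux_sum3 (D : ℤ) (hDsq : ¬∃ m : ℤ, m ^ 2 = D) :
    Summable (fun p : ℤ × ℤ => if p.2 ∣ p.1^2 - D then 1 / (1 + (p.1:ℝ)^2) else 0) := by
  rw [summable_prod_of_nonneg (by intro p; dsimp only; split_ifs <;> simp; positivity)]
  choose s hs hs' using aux_sum1 D hDsq
  constructor
  · intro b
    apply summable_of_ne_finset_zero (s := s b)
    intro a ha
    rw [if_neg]
    exact fun h => ha ((hs b a).1 h)
  · refine Summable.of_nonneg_of_le (fun b => tsum_nonneg fun a => by dsimp only; split_ifs <;> simp; positivity) ?_ (aux_sum2.mul_left (512 * (1 + |(D:ℝ)|) ^ (1/3:ℝ)))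
    intro b
    have : ∑' a : ℤ, (if a ∣ b^2 - D then 1 / (1 + (b:ℝ)^2) else 0) = (s b).card * (1 / (1 + (b:ℝ)^2)) := by
      rw [tsum_eq_sum (s := s b)]
      · rw [Finset.sum_congr rfl (g := fun _ => 1 / (1 + (b:ℝ)^2)) (fun a ha => if_pos ((hs b a).2 ha))]
        simp
      · intro a ha
        rw [if_neg]
        exact fun h => ha ((hs b a).1 h)
    dsimp only
    rw [this]
    have hp : 0 < 1 + (b:ℝ)^2 := by positivity
    calc _ ≤ (512 * ((1 + |(D:ℝ)|) * (1 + (b:ℝ)^2)) ^ (1/3:ℝ)) * (1 / (1 + (b:ℝ)^2)) := by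
          apply mul_le_mul_of_nonneg_right (hs' b) (by positivity)
      _ = _ := by
          rw [Real.mul_rpow (by positivity) hp.le, show (-(2/3):ℝ) = 1/3 - 1 by norm_num, Real.rpow_sub_one hp.ne']
          ring

theorem aux_sum4 (D : ℤ) (hDsq : ¬∃ m : ℤ, m ^ 2 = D) (𝒜 : Set (ℤ × ℤ × ℤ)) (h : 𝒜 ⊆ QD D) :
    Summable (fun q : 𝒜 => 1 / (1 + ((q : ℤ × ℤ × ℤ).2.1 : ℝ) ^ 2)) := by
  have hinj : Function.Injective (fun q : 𝒜 => ((q : ℤ × ℤ × ℤ).2.1, (q : ℤ × ℤ × ℤ).1)) := by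
    rintro ⟨⟨a, b, c⟩, hq⟩ ⟨⟨a', b', c'⟩, hq'⟩ he
    have h1 := h hq
    have h2 := h hq'
    simp only [QD, Set.mem_setOf_eq] at h1 h2
    simp only [Prod.mk.injEq] at he
    obtain ⟨rfl, rfl⟩ := he
    have ha : a ≠ 0 := by
      rintro rfl
      exact hDsq ⟨b, by linarith⟩
    have : a * (c - c') = 0 := by linarith
    rcases mul_eq_zero.mp this with h3 | h3
    · exact absurd h3 ha
    · have : c = c' := by linarith
      subst this; rfl
  refine ((aux_sum3 D hDsq).comp_injective hinj).congr ?_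
  rintro ⟨⟨a, b, c⟩, hq⟩
  have h1 := h hq
  simp only [QD, Set.mem_setOf_eq] at h1
  simp only [Function.comp]
  rw [if_pos]
  exact ⟨4 * c, by linarith⟩

theorem aux_class (D : ℤ) (𝒜 : Set (ℤ × ℤ × ℤ)) (h𝒜 : IsNarrowClass D 𝒜) : 𝒜 ⊆ QD D := by
  obtain ⟨⟨a, b, c⟩, h0, rfl⟩ := h𝒜
  rintro q ⟨γ, rfl⟩
  have hdet := γ.2
  rw [Matrix.det_fin_two] at hdet
  simp only [QD, QAct, Set.mem_setOf_eq] at *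
  rw [← h0]
  generalize γ.1 0 0 = p at *
  generalize γ.1 0 1 = r at *
  generalize γ.1 1 0 = s at *
  generalize γ.1 1 1 = t at *
  linear_combination (b^2 - 4 * a * c) * (p * t - r * s + 1) * hdet

theorem aux_normSq (D : ℤ) (q : ℤ × ℤ × ℤ) (hq : q ∈ QD D) (σ : ℂ) :
    Complex.normSq (Qval q σ) = Qell q σ ^ 2 + D * σ.im ^ 2 := by
  obtain ⟨a, b, c⟩ := q
  simp only [QD, Set.mem_setOf_eq] at hq
  rw [← hq]
  simp [Qval, Qell, Complex.normSq_apply, pow_two]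
  ring

theorem aux_b_le (D : ℤ) (hD : 0 < D) (q : ℤ × ℤ × ℤ) (hq : q ∈ QD D) (σ : ℂ) (hσ : 0 < σ.im) :
    σ.im ^ 4 * (q.2.1 : ℝ) ^ 2 ≤ (2 * σ.im ^ 2 + 8 * σ.re ^ 2) * Complex.normSq (Qval q σ) := by
  have hN := aux_normSq D q hq σ
  have hD' : (0:ℝ) < D := by exact_mod_cast hD
  obtain ⟨a, b, c⟩ := q
  simp only [QD, Set.mem_setOf_eq] at hq
  have hq' : (b:ℝ)^2 - 4 * a * c = D := by exact_mod_cast hq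
  have h1 : σ.im ^ 2 * (2 * a * σ.re + b) ^ 2 ≤ Complex.normSq (Qval (a, b, c) σ) := by
    have : (Qval (a, b, c) σ).im = σ.im * (2 * a * σ.re + b) := by
      simp [Qval, pow_two]; ring
    rw [Complex.normSq_apply, this]
    nlinarith [mul_self_nonneg (Qval (a, b, c) σ).re]
  have h2 : 4 * a * Qell (a, b, c) σ = (2 * a * σ.re + b) ^ 2 + 4 * a ^ 2 * σ.im ^ 2 - D := by
    rw [← hq']
    simp [Qell, Complex.normSq_apply]
    ring
  have h3 : (a:ℝ) ^ 2 * σ.im ^ 4 ≤ Complex.normSq (Qval (a, b, c) σ) := by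
    rw [hN]
    generalize Qell (a, b, c) σ = L at *
    have h4 : 4 * (a:ℝ) ^ 2 * σ.im ^ 2 ≤ 4 * a * L + D := by nlinarith [sq_nonneg (2 * a * σ.re + (b:ℝ))]
    have h5 := mul_le_mul_of_nonneg_left h4 (sq_nonneg σ.im)
    have h6 : 0 < D * σ.im ^ 2 := by positivity
    nlinarith [sq_nonneg (a * σ.im ^ 2 - L)]
  dsimp only
  generalize Complex.normSq (Qval (a, b, c) σ) = N at *
  have h7 : (b:ℝ)^2 ≤ 2 * (2 * a * σ.re + b) ^ 2 + 8 * a ^ 2 * σ.re ^ 2 := by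
    nlinarith [sq_nonneg (4 * a * σ.re + (b:ℝ))]
  calc σ.im ^ 4 * (b : ℝ) ^ 2 ≤ σ.im ^ 4 * (2 * (2 * a * σ.re + b) ^ 2 + 8 * a ^ 2 * σ.re ^ 2) :=
        mul_le_mul_of_nonneg_left h7 (by positivity)
    _ = 2 * σ.im ^ 2 * (σ.im ^ 2 * (2 * a * σ.re + b) ^ 2) + 8 * σ.re ^ 2 * (a ^ 2 * σ.im ^ 4) := by ring
    _ ≤ 2 * σ.im ^ 2 * N + 8 * σ.re ^ 2 * N := by gcongr
    _ = _ := by ring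

theorem aux_term (k : ℕ) (hk : 2 ≤ k) (D : ℤ) (hD : 0 < D) (q : ℤ × ℤ × ℤ) (hq : q ∈ QD D)
    (σ : ℂ) (hσ : 0 < σ.im) :
    ‖Fsummand k D σ q‖ ≤ (Real.sqrt D * σ.im) ^ (k - 1) *
      (D * σ.im ^ 2 / Complex.normSq (Qval q σ)) := by
  have hN := aux_normSq D q hq σ
  have hD' : (0:ℝ) < D := by exact_mod_cast hD
  have hs : Real.sqrt D ^ 2 = D := Real.sq_sqrt hD'.le
  have hs0 : 0 < Real.sqrt D := Real.sqrt_pos.mpr hD'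
  set R := ‖Qval q σ‖ with hR
  have hRN : Complex.normSq (Qval q σ) = R ^ 2 := Complex.normSq_eq_norm_sq _
  have hR2 : (Real.sqrt D * σ.im) ^ 2 ≤ R ^ 2 := by
    rw [← hRN, hN, mul_pow, hs]; nlinarith [sq_nonneg (Qell q σ)]
  have hR1 : Real.sqrt D * σ.im ≤ R := le_of_sq_le_sq hR2 (norm_nonneg _)
  set m := Real.sqrt D * σ.im with hm
  have hm0 : 0 < m := by positivity
  have hR0 : 0 < R := lt_of_lt_of_le hm0 hR1
  have hv : D * σ.im ^ 2 / Complex.normSq (Qval q σ) = (m / R) ^ 2 := by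
    rw [hRN, div_pow, hm, mul_pow, hs]
  set s := m / R with hsdef
  have hs00 : 0 < s := by positivity
  have hs1 : s ≤ 1 := (div_le_one hR0).mpr hR1
  unfold Fsummand
  rw [hv, norm_mul, norm_mul, norm_pow, ← hR, Complex.norm_real, Complex.norm_real,
    Real.norm_of_nonneg (aux_psi_nonneg k (s^2) (by positivity) (by nlinarith))]
  have hsg : ‖Real.sign (Qell q σ)‖ ≤ 1 := by
    rcases Real.sign_apply_eq (Qell q σ) with h | h | h <;> rw [h] <;> simp
  have hpsi := aux_psi_le k hk s hs00 hs1
  calc _ ≤ 1 * R ^ (k-1) * s ^ (2 * k - 1) := by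
        have := aux_psi_nonneg k (s^2) (by positivity) (by nlinarith)
        gcongr
    _ = m ^ (k-1) * s ^ k := by
        have : m = s * R := by rw [hsdef]; field_simp
        rw [this, show 2 * k - 1 = (k - 1) + k by omega, pow_add, mul_pow]; ring
    _ ≤ m ^ (k-1) * s ^ 2 := by
        gcongr ?_ * ?_
        exact pow_le_pow_of_le_one hs00.le hs1 hk

theorem aux_unif (k : ℕ) (hk : 2 ≤ k) (D : ℤ) (hD : 0 < D) (τ : ℂ) (hτ : 0 < τ.im) :
    ∃ C : ℝ, ∀ q ∈ QD D, ∀ t : ℝ, |t| ≤ τ.im / 2 →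
      ‖Fsummand k D (τ + (t : ℂ) * Complex.I) q‖ ≤ C * (1 / (1 + (q.2.1 : ℝ) ^ 2)) := by
  have hD' : (0:ℝ) < D := by exact_mod_cast hD
  set y := τ.im with hy
  set x := τ.re with hx
  refine ⟨(Real.sqrt D * (2 * y)) ^ (k - 1) * (1 + D * (2 * (2 * y) ^ 2 + 8 * x ^ 2) / (y / 2) ^ 2), ?_⟩
  intro q hq t ht
  set σ := τ + (t : ℂ) * Complex.I with hσ
  have him : σ.im = y + t := by simp [hσ, hy]
  have hre : σ.re = x := by simp [hσ, hx]
  obtain ⟨ht1, ht2⟩ := abs_le.mp ht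
  have hl : y / 2 ≤ σ.im := by linarith
  have hu : σ.im ≤ 2 * y := by linarith
  have h0 : 0 < σ.im := by linarith
  have hs0 : 0 < Real.sqrt D := Real.sqrt_pos.mpr hD'
  refine (aux_term k hk D hD q hq σ h0).trans ?_
  rw [mul_assoc]
  have hb := aux_b_le D hD q hq σ h0
  have hN := aux_normSq D q hq σ
  rw [hre] at hb
  set N := Complex.normSq (Qval q σ)
  have hN1 : D * σ.im ^ 2 ≤ N := by rw [hN]; nlinarith [sq_nonneg (Qell q σ)]
  have hN0 : 0 < N := lt_of_lt_of_le (by positivity) hN1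
  have key : D * σ.im ^ 2 / N ≤ (1 + D * (2 * (2 * y) ^ 2 + 8 * x ^ 2) / (y / 2) ^ 2) * (1 / (1 + (q.2.1 : ℝ) ^ 2)) := by
    rw [mul_one_div, div_le_div_iff₀ hN0 (by positivity), mul_add, mul_one, add_mul, one_mul]
    apply add_le_add hN1
    have h1 : σ.im ^ 2 * (q.2.1 : ℝ) ^ 2 * (y / 2) ^ 2 ≤ (2 * (2 * y) ^ 2 + 8 * x ^ 2) * N := by
      calc σ.im ^ 2 * (q.2.1 : ℝ) ^ 2 * (y / 2) ^ 2 ≤ σ.im ^ 2 * (q.2.1 : ℝ) ^ 2 * σ.im ^ 2 := by gcongr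
        _ = σ.im ^ 4 * (q.2.1 : ℝ) ^ 2 := by ring
        _ ≤ _ := hb
        _ ≤ _ := by gcongr
    rw [div_mul_eq_mul_div, le_div_iff₀ (by positivity)]
    nlinarith
  gcongr

theorem aux_h_cont (k : ℕ) (hk : 2 ≤ k) (D : ℤ) (hD : 0 < D) (q : ℤ × ℤ × ℤ) (hq : q ∈ QD D)
    (τ : ℂ) (hτ : 0 < τ.im) :
    ContinuousAt (fun σ : ℂ => Qval q σ ^ (k - 1) *
      ((psi k ((D : ℝ) * σ.im ^ 2 / Complex.normSq (Qval q σ)) : ℝ) : ℂ)) τ := by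
  have hD' : (0:ℝ) < D := by exact_mod_cast hD
  have hQ : Continuous (Qval q) := by unfold Qval; fun_prop
  have hN0 : Complex.normSq (Qval q τ) ≠ 0 := by
    rw [aux_normSq D q hq τ]
    have : 0 < D * τ.im ^ 2 := by positivity
    nlinarith [sq_nonneg (Qell q τ)]
  apply (hQ.continuousAt.pow _).mul
  apply Complex.continuous_ofReal.continuousAt.comp
  apply (aux_psi_cont k hk).continuousAt.comp
  have c1 : ContinuousAt (fun σ : ℂ => (D : ℝ) * σ.im ^ 2) τ := by fun_prop
  have c2 : ContinuousAt (fun σ : ℂ => Complex.normSq (Qval q σ)) τ :=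
    (Complex.continuous_normSq.comp hQ).continuousAt
  exact ContinuousAt.div c1 c2 hN0

open Filter Topology in
theorem aux_lim (k : ℕ) (hk : 2 ≤ k) (D : ℤ) (hD : 0 < D) (hDsq : ¬∃ m : ℤ, m ^ 2 = D)
    (q : ℤ × ℤ × ℤ) (hq : q ∈ QD D) (τ : ℂ) (hτ : 0 < τ.im) :
    Tendsto (fun w : ℝ => Fsummand k D (τ + (w : ℂ) * Complex.I) q +
      Fsummand k D (τ - (w : ℂ) * Complex.I) q) (𝓝[>] 0) (𝓝 (2 * Fsummand k D τ q)) := by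
  have hh := aux_h_cont k hk D hD q hq τ hτ
  set h : ℂ → ℂ := fun σ : ℂ => Qval q σ ^ (k - 1) *
      ((psi k ((D : ℝ) * σ.im ^ 2 / Complex.normSq (Qval q σ)) : ℝ) : ℂ) with hdef
  have hF : ∀ σ, Fsummand k D σ q = ((Real.sign (Qell q σ) : ℝ) : ℂ) * h σ := by
    intro σ; simp only [Fsummand, hdef]; ring
  have hp : Tendsto (fun w : ℝ => τ + (w : ℂ) * Complex.I) (𝓝[>] 0) (𝓝 τ) := by
    apply tendsto_nhdsWithin_of_tendsto_nhds
    have : Continuous (fun w : ℝ => τ + (w : ℂ) * Complex.I) := by fun_prop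
    simpa using this.tendsto 0
  have hm : Tendsto (fun w : ℝ => τ - (w : ℂ) * Complex.I) (𝓝[>] 0) (𝓝 τ) := by
    apply tendsto_nhdsWithin_of_tendsto_nhds
    have : Continuous (fun w : ℝ => τ - (w : ℂ) * Complex.I) := by fun_prop
    simpa using this.tendsto 0
  have hL : Continuous (Qell q) := by
    unfold Qell
    have := Complex.continuous_normSq
    fun_prop
  simp only [hF]
  by_cases h0 : Qell q τ = 0
  · rw [h0, Real.sign_zero]
    have hev : ∀ᶠ w : ℝ in 𝓝[>] 0, ((Real.sign (q.1 : ℝ) : ℝ) : ℂ) *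
        (h (τ + (w : ℂ) * Complex.I) - h (τ - (w : ℂ) * Complex.I)) =
        ((Real.sign (Qell q (τ + (w : ℂ) * Complex.I)) : ℝ) : ℂ) * h (τ + (w : ℂ) * Complex.I) +
        ((Real.sign (Qell q (τ - (w : ℂ) * Complex.I)) : ℝ) : ℂ) * h (τ - (w : ℂ) * Complex.I) := by
      filter_upwards [Ioo_mem_nhdsGT hτ] with w hw
      obtain ⟨hw0, hw1⟩ := hw
      have e1 : Qell q (τ + (w : ℂ) * Complex.I) = q.1 * (w * (2 * τ.im + w)) := by
        have : Qell q (τ + (w : ℂ) * Complex.I) = Qell q τ + q.1 * (w * (2 * τ.im + w)) := by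
          simp [Qell, Complex.normSq_apply]; ring
        rw [this, h0, zero_add]
      have e2 : Qell q (τ - (w : ℂ) * Complex.I) = -(q.1 * (w * (2 * τ.im - w))) := by
        have : Qell q (τ - (w : ℂ) * Complex.I) = Qell q τ - q.1 * (w * (2 * τ.im - w)) := by
          simp [Qell, Complex.normSq_apply]; ring
        rw [this, h0, zero_sub]
      have p1 : 0 < w * (2 * τ.im + w) := by positivity
      have p2 : 0 < w * (2 * τ.im - w) := mul_pos hw0 (by linarith)
      have s1 : ∀ z : ℝ, 0 < z → Real.sign (q.1 * z) = Real.sign (q.1 : ℝ) := by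
        intro z hz
        rcases lt_trichotomy (q.1 : ℝ) 0 with ha | ha | ha
        · rw [Real.sign_of_neg ha, Real.sign_of_neg (mul_neg_of_neg_of_pos ha hz)]
        · rw [ha, zero_mul]
        · rw [Real.sign_of_pos ha, Real.sign_of_pos (mul_pos ha hz)]
      rw [e1, e2, Real.sign_neg, s1 _ p1, s1 _ p2]
      push_cast; ring
    refine Tendsto.congr' hev ?_
    have := ((hh.tendsto.comp hp).sub (hh.tendsto.comp hm)).const_mul ((Real.sign (q.1 : ℝ) : ℝ) : ℂ)
    simpa using this
  · have hs : ∀ᶠ σ in 𝓝 τ, Real.sign (Qell q σ) = Real.sign (Qell q τ) := by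
      rcases lt_or_gt_of_ne h0 with h1 | h1
      · filter_upwards [hL.continuousAt.eventually_lt_const h1] with σ hσ
        rw [Real.sign_of_neg h1, Real.sign_of_neg hσ]
      · filter_upwards [hL.continuousAt.eventually_const_lt h1] with σ hσ
        rw [Real.sign_of_pos h1, Real.sign_of_pos hσ]
    have hg : Tendsto (fun σ => ((Real.sign (Qell q σ) : ℝ) : ℂ) * h σ) (𝓝 τ)
        (𝓝 (((Real.sign (Qell q τ) : ℝ) : ℂ) * h τ)) := by
      refine Tendsto.congr' ?_ (hh.tendsto.const_mul ((Real.sign (Qell q τ) : ℝ) : ℂ))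
      filter_upwards [hs] with σ hσ
      rw [hσ]
    rw [two_mul]
    exact (hg.comp hp).add (hg.comp hm)

theorem stmt3 (k : ℕ) (hk : 2 ≤ k) (D : ℤ) (hD : 0 < D)
    (hD4 : D % 4 = 0 ∨ D % 4 = 1) (hDsq : ¬∃ m : ℤ, m ^ 2 = D)
    (𝒜 : Set (ℤ × ℤ × ℤ)) (h𝒜 : IsNarrowClass D 𝒜)
    (τ : ℂ) (hτ : 0 < τ.im) (hτE : ∃ q ∈ QD D, Qell q τ = 0) :
    Filter.Tendsto
      (fun w : ℝ => FA k D 𝒜 (τ + (w : ℂ) * Complex.I) + FA k D 𝒜 (τ - (w : ℂ) * Complex.I))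
      (nhdsWithin 0 (Set.Ioi 0)) (nhds (2 * FA k D 𝒜 τ)) := by
  have hsub := aux_class D 𝒜 h𝒜
  obtain ⟨C, hC⟩ := aux_unif k hk D hD τ hτ
  have hC' : ∀ q ∈ QD D, ∀ t : ℝ, |t| ≤ τ.im / 2 →
      ‖Fsummand k D (τ - (t : ℂ) * Complex.I) q‖ ≤ C * (1 / (1 + (q.2.1 : ℝ) ^ 2)) := by
    intro q hq t ht
    have := hC q hq (-t) (by rwa [abs_neg])
    simpa [sub_eq_add_neg] using this
  have hsum := (aux_sum4 D hDsq 𝒜 hsub).mul_left C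
  have hev : ∀ᶠ w : ℝ in nhdsWithin 0 (Set.Ioi 0), |w| ≤ τ.im / 2 := by
    filter_upwards [Ioo_mem_nhdsGT (half_pos hτ)] with w hw
    rw [abs_of_pos hw.1]
    exact hw.2.le
  have main : Filter.Tendsto
      (fun w : ℝ => ∑' q : 𝒜, (Fsummand k D (τ + (w : ℂ) * Complex.I) q +
        Fsummand k D (τ - (w : ℂ) * Complex.I) q))
      (nhdsWithin 0 (Set.Ioi 0)) (nhds (∑' q : 𝒜, 2 * Fsummand k D τ q)) := by
    refine tendsto_tsum_of_dominated_convergence (hsum.add hsum) ?_ ?_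
    · intro q
      exact aux_lim k hk D hD hDsq q (hsub q.2) τ hτ
    · filter_upwards [hev] with w hw q
      exact (norm_add_le _ _).trans (add_le_add (hC q (hsub q.2) w hw) (hC' q (hsub q.2) w hw))
  rw [tsum_mul_left] at main
  unfold FA
  rw [mul_left_comm]
  refine Filter.Tendsto.congr' ?_ (main.const_mul _)
  filter_upwards [hev] with w hw
  have s1 : Summable (fun q : 𝒜 => Fsummand k D (τ + (w : ℂ) * Complex.I) q) :=
    Summable.of_norm_bounded hsum (fun q => hC q (hsub q.2) w hw)
  have s2 : Summable (fun q : 𝒜 => Fsummand k D (τ - (w : ℂ) * Complex.I) q) :=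
    Summable.of_norm_bounded hsum (fun q => hC' q (hsub q.2) w hw)
  rw [s1.tsum_add s2, mul_add]
end

section
/- For every τ ∈ ℍ∖E_D one has: (i) ξ_{2−2k}(F_{1−k,D,𝒜})(τ) = D^{1/2−k} · f_{k,D,𝒜}(τ); (ii) 𝒟^{2k−1}(F_{1−k,D,𝒜})(τ) = −D^{1/2−k} · ((2k−2)!/(4π)^{2k−1}) · f_{k,D,𝒜}(τ); and (iii) Δ_{2−2k}(F_{1−k,D,𝒜})(τ) = 0. -/
theorem aux_cube_two (e : ℕ) : (e + 1) ^ 3 ≤ 8 * 2 ^ e := by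
  rcases lt_or_ge e 3 with h | h
  · interval_cases e <;> norm_num
  · induction e, h using Nat.le_induction with
    | base => norm_num
    | succ m hm ih =>
      rw [pow_succ 2 m]
      nlinarith [Nat.mul_le_mul hm hm, Nat.mul_le_mul hm (Nat.mul_le_mul hm hm)]

theorem aux_divisor_cube (n : ℕ) (hn : n ≠ 0) : n.divisors.card ^ 3 ≤ 8 ^ 8 * n := by
  rw [Nat.card_divisors hn, ← Finset.prod_pow]
  have h1 : ∀ p ∈ n.primeFactors, (n.factorization p + 1) ^ 3
      ≤ (if p < 8 then 8 else 1) * p ^ n.factorization p := by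
    intro p hp
    have hp2 : 2 ≤ p := (Nat.prime_of_mem_primeFactors hp).two_le
    split_ifs with h
    · exact (aux_cube_two _).trans (Nat.mul_le_mul_left _ (Nat.pow_le_pow_left hp2 _))
    · have h3 : n.factorization p + 1 ≤ 2 ^ n.factorization p := Nat.lt_two_pow_self
      calc (n.factorization p + 1) ^ 3 ≤ (2 ^ n.factorization p) ^ 3 := Nat.pow_le_pow_left h3 _
        _ = 8 ^ n.factorization p := by rw [← pow_mul, mul_comm, pow_mul]; norm_num
        _ ≤ p ^ n.factorization p := Nat.pow_le_pow_left (by omega) _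
        _ = _ := by ring
  refine (Finset.prod_le_prod' h1).trans ?_
  rw [Finset.prod_mul_distrib]
  have h2 : ∏ p ∈ n.primeFactors, p ^ n.factorization p = n :=
    Nat.prod_factorization_pow_eq_self hn
  rw [h2]
  refine Nat.mul_le_mul_right _ ?_
  rw [Finset.prod_ite, Finset.prod_const_one, mul_one, Finset.prod_const]
  refine Nat.pow_le_pow_right (by norm_num) ?_
  calc _ ≤ (Finset.range 8).card := Finset.card_le_card (by
        intro p hp; simp at hp ⊢; exact hp.2)
    _ = 8 := by simp

/-- The size of a form. -/
noncomputable def Nq (q : ℤ × ℤ × ℤ) : ℝ := |(q.1 : ℝ)| + |(q.2.1 : ℝ)| + |(q.2.2 : ℝ)|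

theorem aux_a_ne {D : ℤ} (hDsq : ¬∃ m : ℤ, m ^ 2 = D) {q : ℤ × ℤ × ℤ} (hq : q ∈ QD D) :
    q.1 ≠ 0 := by
  intro h
  apply hDsq
  refine ⟨q.2.1, ?_⟩
  have := hq
  simp only [QD, Set.mem_ofPred_eq, h] at this
  linarith

theorem aux_Nq_ge {D : ℤ} (hDsq : ¬∃ m : ℤ, m ^ 2 = D) {q : ℤ × ℤ × ℤ} (hq : q ∈ QD D) :
    1 + |(q.2.1 : ℝ)| ≤ Nq q := by
  have h : (1 : ℝ) ≤ |(q.1 : ℝ)| := by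
    have := Int.one_le_abs (aux_a_ne hDsq hq)
    exact_mod_cast this
  unfold Nq
  linarith [abs_nonneg (q.2.2 : ℝ)]

theorem aux_fiber_card {D : ℤ} (hDsq : ¬∃ m : ℤ, m ^ 2 = D) (b : ℤ)
    (s : Finset (ℤ × ℤ × ℤ)) (hs : ∀ q ∈ s, q ∈ QD D ∧ q.2.1 = b) :
    s.card ≤ 2 * (b ^ 2 - D).natAbs.divisors.card := by
  set d := (b ^ 2 - D).natAbs.divisors with hd
  have hne : b ^ 2 - D ≠ 0 := fun h => hDsq ⟨b, by linarith⟩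
  let t : Finset ℤ := d.image (fun n : ℕ => (n : ℤ)) ∪ d.image (fun n : ℕ => -(n : ℤ))
  have ht : t.card ≤ 2 * d.card := by
    refine (Finset.card_union_le _ _).trans ?_
    have h1 := Finset.card_image_le (s := d) (f := fun n : ℕ => (n : ℤ))
    have h2 := Finset.card_image_le (s := d) (f := fun n : ℕ => -(n : ℤ))
    omega
  refine le_trans ?_ ht
  refine Finset.card_le_card_of_injOn (fun q => q.1) ?_ ?_
  · intro q hq
    obtain ⟨h1, h2⟩ := hs q hq
    simp only [QD, Set.mem_ofPred_eq] at h1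
    have hdvd : q.1.natAbs ∣ (b ^ 2 - D).natAbs := by
      rw [Int.natAbs_dvd_natAbs]
      exact ⟨4 * q.2.2, by rw [← h2]; linarith⟩
    have hm : q.1.natAbs ∈ d := by
      rw [hd, Nat.mem_divisors]
      exact ⟨hdvd, by simpa using hne⟩
    simp only [t, Finset.coe_union, Finset.coe_image, Set.mem_union, Set.mem_image,
      Finset.mem_coe]
    rcases Int.natAbs_eq q.1 with h | h
    · exact Or.inl ⟨_, hm, h.symm⟩
    · exact Or.inr ⟨_, hm, h.symm⟩
  · intro q hq q' hq' h
    obtain ⟨h1, h2⟩ := hs q hq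
    obtain ⟨h1', h2'⟩ := hs q' hq'
    have ha := aux_a_ne hDsq h1
    simp only [QD, Set.mem_ofPred_eq] at h1 h1'
    simp only at h
    have h3 : q.2.2 = q'.2.2 := by
      rw [← h, h2'] at h1'
      rw [h2] at h1
      have : q.1 * q.2.2 = q.1 * q'.2.2 := by linarith
      exact mul_left_cancel₀ ha this
    ext
    · exact h
    · rw [h2, h2']
    · exact h3

theorem aux_summable_int : Summable (fun b : ℤ => (1 + |(b : ℝ)|) ^ (-(4 / 3) : ℝ)) := by
  have h0 : Summable (fun n : ℕ => (1 + (n : ℝ)) ^ (-(4 / 3) : ℝ)) := by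
    have := (Real.summable_nat_rpow (p := -(4/3))).2 (by norm_num)
    have := (summable_nat_add_iff 1).2 this
    refine this.congr ?_
    intro n
    push_cast
    rw [add_comm]
  refine Summable.of_nat_of_neg ?_ ?_
  · simpa using h0
  · simpa using h0

theorem aux_summable_two {D : ℤ} (hD : 0 < D) (hDsq : ¬∃ m : ℤ, m ^ 2 = D) :
    Summable (fun q : QD D => (Nq q ^ 2)⁻¹) := by
  classical
  set K : ℝ := 2 * ((8:ℝ) ^ 8 * (D + 1)) ^ (1/3 : ℝ) with hK
  have hDr : (0:ℝ) < D := by exact_mod_cast hD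
  have hsumm := aux_summable_int.mul_left K
  refine summable_of_sum_le (c := ∑' b : ℤ, K * (1 + |(b : ℝ)|) ^ (-(4 / 3) : ℝ)) ?_ ?_
  · intro q; positivity
  · intro s
    let f : ℤ × ℤ × ℤ → ℝ := fun q => (Nq q ^ 2)⁻¹
    let s' : Finset (ℤ × ℤ × ℤ) := s.map ⟨Subtype.val, Subtype.val_injective⟩
    have hs' : ∀ q ∈ s', q ∈ QD D := by
      intro q hq
      simp only [s', Finset.mem_map] at hq
      obtain ⟨x, _, rfl⟩ := hq
      exact x.2
    have e1 : ∑ q ∈ s, (Nq (q : ℤ × ℤ × ℤ) ^ 2)⁻¹ = ∑ q ∈ s', f q := by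
      simp [s', f]
    rw [e1, ← Finset.sum_fiberwise_of_maps_to (t := s'.image (fun q => q.2.1))
      (g := fun q => q.2.1) (fun q hq => Finset.mem_image_of_mem _ hq)]
    refine le_trans (Finset.sum_le_sum ?_) (hsumm.sum_le_tsum _ (fun b _ => by positivity))
    intro b _
    set u := s'.filter (fun q => q.2.1 = b)
    have hu : ∀ q ∈ u, q ∈ QD D ∧ q.2.1 = b := by
      intro q hq
      rw [Finset.mem_filter] at hq
      exact ⟨hs' q hq.1, hq.2⟩
    have hc := aux_fiber_card hDsq b u hu
    have hB : (0:ℝ) < 1 + |(b:ℝ)| := by positivity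
    have h1 : ∑ q ∈ u, f q ≤ u.card • ((1 + |(b:ℝ)|) ^ 2)⁻¹ := by
      refine Finset.sum_le_card_nsmul _ _ _ ?_
      intro q hq
      have := aux_Nq_ge hDsq (hu q hq).1
      rw [(hu q hq).2] at this
      simp only [f]
      gcongr
    refine h1.trans ?_
    rw [nsmul_eq_mul]
    have hne : b ^ 2 - D ≠ 0 := fun h => hDsq ⟨b, by linarith⟩
    have hd := aux_divisor_cube (b ^ 2 - D).natAbs (by simpa using hne)
    generalize (b ^ 2 - D).natAbs.divisors.card = d at hd hc
    have hd' : (d : ℝ) ^ 3 ≤ 8 ^ 8 * (D + 1) * (1 + |(b:ℝ)|) ^ 2 := by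
      have h2 : (d : ℝ) ^ 3 ≤ 8 ^ 8 * |((b:ℝ) ^ 2 - D)| := by
        have : ((d ^ 3 : ℕ) : ℝ) ≤ ((8 ^ 8 * (b ^ 2 - D).natAbs : ℕ) : ℝ) := by exact_mod_cast hd
        push_cast at this
        rw [Nat.cast_natAbs] at this
        push_cast at this
        norm_num at this ⊢; exact this
      have h3 : |((b:ℝ) ^ 2 - D)| ≤ (D + 1) * (1 + |(b:ℝ)|) ^ 2 := by
        have hb := sq_abs (b:ℝ)
        have hb0 := abs_nonneg (b:ℝ)
        rw [abs_le]
        constructor <;> nlinarith [mul_nonneg hDr.le hb0, mul_nonneg hDr.le (sq_nonneg (b:ℝ))]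
      calc _ ≤ _ := h2
        _ ≤ 8 ^ 8 * ((D + 1) * (1 + |(b:ℝ)|) ^ 2) := by gcongr
        _ = _ := by ring
    have hd2 : (d : ℝ) ≤ ((8:ℝ) ^ 8 * (D + 1)) ^ (1/3 : ℝ) * (1 + |(b:ℝ)|) ^ (2/3 : ℝ) := by
      have h4 : (d : ℝ) = ((d : ℝ) ^ 3) ^ (1/3 : ℝ) := by
        rw [← Real.rpow_natCast, ← Real.rpow_mul (by positivity)]
        norm_num
      rw [h4]
      refine (Real.rpow_le_rpow (pow_nonneg (Nat.cast_nonneg _) _) hd' (by norm_num)).trans ?_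
      rw [Real.mul_rpow (by positivity) (by positivity)]
      rw [← Real.rpow_natCast (1 + |(b:ℝ)|) 2, ← Real.rpow_mul hB.le]
      norm_num
    calc (u.card : ℝ) * ((1 + |(b:ℝ)|) ^ 2)⁻¹ ≤ (2 * d : ℝ) * ((1 + |(b:ℝ)|) ^ 2)⁻¹ := by
          gcongr
          exact_mod_cast hc
      _ ≤ (2 * (((8:ℝ) ^ 8 * (D + 1)) ^ (1/3 : ℝ) * (1 + |(b:ℝ)|) ^ (2/3 : ℝ)))
            * ((1 + |(b:ℝ)|) ^ 2)⁻¹ := by gcongr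
      _ = K * ((1 + |(b:ℝ)|) ^ (2/3 : ℝ) * ((1 + |(b:ℝ)|) ^ 2)⁻¹) := by rw [hK]; ring
      _ = K * (1 + |(b:ℝ)|) ^ (-(4/3) : ℝ) := by
          rw [← Real.rpow_natCast (1 + |(b:ℝ)|) 2, ← Real.rpow_neg hB.le, ← Real.rpow_add hB]
          norm_num

theorem aux_summable_k {D : ℤ} (hD : 0 < D) (hDsq : ¬∃ m : ℤ, m ^ 2 = D) (k : ℕ) (hk : 2 ≤ k)
    (A : Set (ℤ × ℤ × ℤ)) (hA : A ⊆ QD D) :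
    Summable (fun q : A => (Nq q ^ k)⁻¹) := by
  have h := (aux_summable_two hD hDsq).comp_injective (Set.inclusion_injective hA)
  refine Summable.of_nonneg_of_le (fun q => ?_) (fun q => ?_) h
  · unfold Nq; positivity
  · have h1 := aux_Nq_ge hDsq (hA q.2)
    have h2 : 1 ≤ Nq q := by linarith [abs_nonneg ((q : ℤ × ℤ × ℤ).2.1 : ℝ)]
    simp only [Function.comp, Set.coe_inclusion]
    gcongr

theorem aux_class_subset {D : ℤ} {A : Set (ℤ × ℤ × ℤ)} (h : IsNarrowClass D A) : A ⊆ QD D := by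
  obtain ⟨q0, hq0, rfl⟩ := h
  rintro q ⟨γ, rfl⟩
  have hdet := γ.2
  rw [Matrix.det_fin_two] at hdet
  simp only [QD, Set.mem_ofPred_eq, QAct] at hq0 ⊢
  rw [← hq0]
  linear_combination (q0.2.1 ^ 2 - 4 * q0.1 * q0.2.2) *
    ((γ.1 0 0 * γ.1 1 1 - γ.1 0 1 * γ.1 1 0) + 1) * hdet


theorem aux_real_bound (a b c x y D K B n2 L M : ℝ) (hD : 0 < D) (hy : 0 < y)
    (hn2e : n2 = x ^ 2 + y ^ 2) (hK : K = 1 / y ^ 2 + D)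
    (hB : B = 4 * K + D + 1 + 2 * |x| * K) (hdisc : b ^ 2 - 4 * a * c = D)
    (hLe : L = a * n2 + b * x + c) (hM : M = |L| + 1) :
    |a| + |b| + |c| ≤ (K + B + (1 + K * n2 + B * |x|)) * M := by
  have hn20 : 0 < n2 := by rw [hn2e]; positivity
  have hK0 : 0 < K := by rw [hK]; positivity
  have h3 : y ^ 2 * K = 1 + y ^ 2 * D := by rw [hK]; field_simp
  have hKy : 1 ≤ y ^ 2 * K := by
    rw [h3]; nlinarith [mul_pos (pow_pos hy 2) hD]
  have hB0 : 0 < B := by rw [hB]; positivity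
  have hM1 : 1 ≤ M := by rw [hM]; linarith [abs_nonneg L]
  have hLM : |L| ≤ M := by rw [hM]; linarith
  have key : (2 * a * x + b) ^ 2 + 4 * a ^ 2 * y ^ 2 = 4 * a * L + D := by
    rw [hLe, hn2e, ← hdisc]; ring
  have haL : a * L ≤ |a| * M := by
    calc a * L ≤ |a * L| := le_abs_self _
      _ = |a| * |L| := abs_mul _ _
      _ ≤ |a| * M := by gcongr
  clear hK hM
  have h1M : 1 ≤ M ^ 2 := by nlinarith
  have hDM : D ≤ D * M ^ 2 := by nlinarith
  have hA : |a| ≤ K * M := by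
    by_contra! h
    have h2 : 4 * (|a| ^ 2 * y ^ 2) ≤ 4 * (|a| * M) + D * M ^ 2 := by
      rw [sq_abs]; linarith [sq_nonneg (2 * a * x + b)]
    have h4 : |a| * y ^ 2 * (K * M) < |a| * y ^ 2 * |a| := by
      have : 0 < |a| := lt_trans (by positivity) h
      gcongr
    have h5 : |a| * y ^ 2 * (K * M) = |a| * M + |a| * (y ^ 2 * D * M) := by
      linear_combination |a| * M * h3
    have h6 : K * M * (y ^ 2 * D * M) ≤ |a| * (y ^ 2 * D * M) := by gcongr
    have h7 : K * M * (y ^ 2 * D * M) = (y ^ 2 * K) * (D * M ^ 2) := by ring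
    have h8 : 1 * (D * M ^ 2) ≤ (y ^ 2 * K) * (D * M ^ 2) := by gcongr
    have h9 : 0 < D * M ^ 2 := by positivity
    have h10 : |a| * y ^ 2 * |a| = |a| ^ 2 * y ^ 2 := by ring
    linarith
  have hBB : |2 * a * x + b| ≤ (4 * K + D + 1) * M := by
    apply abs_le_of_sq_le_sq _ (by positivity)
    have h2 : |a| * M ≤ K * M * M := by gcongr
    have h3 : (2 * a * x + b) ^ 2 ≤ (4 * K + D) * M ^ 2 := by
      have h0 : 0 ≤ 4 * a ^ 2 * y ^ 2 := by positivity
      linarith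
    have h4 : (4 * K + D) ≤ (4 * K + D + 1) ^ 2 := by nlinarith
    calc _ ≤ _ := h3
      _ ≤ (4 * K + D + 1) ^ 2 * M ^ 2 := by gcongr
      _ = _ := by ring
  have hb' : |b| ≤ B * M := by
    have : b = (2 * a * x + b) - 2 * x * a := by ring
    rw [this]
    refine (abs_sub _ _).trans ?_
    have h2 : |2 * x * a| ≤ 2 * |x| * (K * M) := by
      rw [abs_mul, abs_mul, abs_of_pos (by norm_num : (0:ℝ) < 2)]; gcongr
    rw [hB]
    linarith
  have hc' : |c| ≤ (1 + K * n2 + B * |x|) * M := by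
    have : c = L - a * n2 - b * x := by rw [hLe]; ring
    rw [this]
    have h1 := abs_sub (L - a * n2) (b * x)
    have h2 := abs_sub L (a * n2)
    rw [abs_mul] at h1 h2
    rw [abs_of_pos hn20] at h2
    have h3 : |a| * n2 ≤ K * M * n2 := by gcongr
    have h4 : |b| * |x| ≤ B * M * |x| := by gcongr
    linarith
  linarith

theorem aux_ell_bound {D : ℤ} (hD : 0 < D) (τ : ℂ) (hτ : 0 < τ.im) :
    ∃ C : ℝ, 0 < C ∧ ∀ q ∈ QD D, Nq q ≤ C * (|Qell q τ| + 1) := by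
  have hDr : (0:ℝ) < D := by exact_mod_cast hD
  obtain ⟨K, hK⟩ : ∃ K : ℝ, K = 1 / τ.im ^ 2 + D := ⟨_, rfl⟩
  obtain ⟨B, hB⟩ : ∃ B : ℝ, B = 4 * K + D + 1 + 2 * |τ.re| * K := ⟨_, rfl⟩
  have hK0 : 0 < K := by rw [hK]; positivity
  have hB0 : 0 < B := by rw [hB]; positivity
  have h0 := Complex.normSq_nonneg τ
  refine ⟨K + B + (1 + K * Complex.normSq τ + B * |τ.re|), by positivity, ?_⟩
  intro q hq
  have hdisc : (q.2.1 : ℝ) ^ 2 - 4 * q.1 * q.2.2 = D := by exact_mod_cast hq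
  exact aux_real_bound q.1 q.2.1 q.2.2 τ.re τ.im D K B (Complex.normSq τ) (Qell q τ) _ hDr hτ
    (by rw [Complex.normSq_apply]; ring) hK hB hdisc rfl rfl

theorem aux_ell_bound2 {D : ℤ} (hD : 0 < D) (hDsq : ¬∃ m : ℤ, m ^ 2 = D)
    (τ : ℂ) (hτ : 0 < τ.im) (hE : ∀ q ∈ QD D, Qell q τ ≠ 0) :
    ∃ δ : ℝ, 0 < δ ∧ ∀ q ∈ QD D, δ * Nq q ≤ |Qell q τ| := by
  obtain ⟨C, hC, h⟩ := aux_ell_bound hD τ hτ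
  have hpos : ∀ q ∈ QD D, 0 < Nq q := fun q hq => by
    have := aux_Nq_ge hDsq hq
    linarith [abs_nonneg (q.2.1 : ℝ)]
  set S : Set (ℤ × ℤ × ℤ) := {q | q ∈ QD D ∧ Nq q ≤ 2 * C} with hS
  have hfin : S.Finite := by
    obtain ⟨m, hm⟩ := exists_nat_ge (2 * C)
    refine Set.Finite.subset (Set.finite_Icc ((-m, -m, -m) : ℤ × ℤ × ℤ) (m, m, m)) ?_
    rintro ⟨a, b, c⟩ ⟨_, hq⟩
    have hq' : |(a:ℝ)| + |(b:ℝ)| + |(c:ℝ)| ≤ m := hq.trans hm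
    have h3 : |a| + |b| + |c| ≤ (m : ℤ) := by exact_mod_cast hq'
    have ha := abs_nonneg a
    have hb := abs_nonneg b
    have hc := abs_nonneg c
    have ha1 := abs_le.1 (show |a| ≤ m by linarith)
    have hb1 := abs_le.1 (show |b| ≤ m by linarith)
    have hc1 := abs_le.1 (show |c| ≤ m by linarith)
    exact ⟨⟨ha1.1, hb1.1, hc1.1⟩, ⟨ha1.2, hb1.2, hc1.2⟩⟩
  have hmin : ∃ δ : ℝ, 0 < δ ∧ ∀ q ∈ S, δ ≤ |Qell q τ| / Nq q := by
    rcases S.eq_empty_or_nonempty with h0 | h0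
    · exact ⟨1, one_pos, by simp [h0]⟩
    · obtain ⟨q0, hq0, hq1⟩ := Set.exists_min_image S (fun q => |Qell q τ| / Nq q) hfin h0
      exact ⟨_, div_pos (abs_pos.2 (hE q0 hq0.1)) (hpos q0 hq0.1), hq1⟩
  obtain ⟨δ, hδ, h1⟩ := hmin
  refine ⟨min δ (1 / (2 * C)), by positivity, ?_⟩
  intro q hq
  have hN := hpos q hq
  by_cases hqS : Nq q ≤ 2 * C
  · have := h1 q ⟨hq, hqS⟩
    rw [le_div_iff₀ hN] at this
    refine le_trans ?_ this
    gcongr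
    exact min_le_left _ _
  · push Not at hqS
    have h2 := h q hq
    have h3 : 1 ≤ |Qell q τ| := by
      by_contra! h4
      nlinarith
    have h5 : Nq q ≤ 2 * C * |Qell q τ| := by nlinarith
    calc min δ (1 / (2 * C)) * Nq q ≤ 1 / (2 * C) * (2 * C * |Qell q τ|) := by
          gcongr
          exact min_le_right _ _
      _ = _ := by field_simp

theorem aux_geometry {D : ℤ} (hD : 0 < D) (hDsq : ¬∃ m : ℤ, m ^ 2 = D)
    (τ : ℂ) (hτ : 0 < τ.im) (hE : ∀ q ∈ QD D, Qell q τ ≠ 0) :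
    ∃ δ r : ℝ, 0 < δ ∧ 0 < r ∧ ∀ z ∈ Metric.ball τ r, 0 < z.im ∧ ∀ q ∈ QD D,
      δ * Nq q ≤ |Qell q z| ∧ Real.sign (Qell q z) = Real.sign (Qell q τ) := by
  obtain ⟨δ, hδ, h⟩ := aux_ell_bound2 hD hDsq τ hτ hE
  have hev : ∀ᶠ z in nhds τ, 0 < z.im ∧
      |Complex.normSq z - Complex.normSq τ| + |z.re - τ.re| < δ / 2 := by
    refine (Complex.continuous_im.continuousAt.eventually (lt_mem_nhds hτ)).and ?_
    have hc : Continuous fun z : ℂ => |Complex.normSq z - Complex.normSq τ| + |z.re - τ.re| := by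
      have := Complex.continuous_normSq
      have := Complex.continuous_re
      fun_prop
    refine hc.continuousAt.eventually (gt_mem_nhds ?_)
    simpa using half_pos hδ
  obtain ⟨r, hr, hball⟩ := Metric.eventually_nhds_iff_ball.1 hev
  refine ⟨δ / 2, r, half_pos hδ, hr, fun z hz => ⟨(hball z hz).1, fun q hq => ?_⟩⟩
  have h1 := (hball z hz).2
  have h0 := h q hq
  have hN : 0 < Nq q := by
    have := aux_Nq_ge hDsq hq
    linarith [abs_nonneg (q.2.1 : ℝ)]
  have hdiff : |Qell q z - Qell q τ| ≤ Nq q * (δ / 2) := by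
    have e : Qell q z - Qell q τ = (q.1 : ℝ) * (Complex.normSq z - Complex.normSq τ)
        + (q.2.1 : ℝ) * (z.re - τ.re) := by simp only [Qell]; ring
    rw [e]
    refine (abs_add_le _ _).trans ?_
    rw [abs_mul, abs_mul]
    have ha : |(q.1 : ℝ)| ≤ Nq q := by
      unfold Nq; linarith [abs_nonneg (q.2.1 : ℝ), abs_nonneg (q.2.2 : ℝ)]
    have hb : |(q.2.1 : ℝ)| ≤ Nq q := by
      unfold Nq; linarith [abs_nonneg (q.1 : ℝ), abs_nonneg (q.2.2 : ℝ)]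
    calc _ ≤ Nq q * |Complex.normSq z - Complex.normSq τ| + Nq q * |z.re - τ.re| := by gcongr
      _ = Nq q * (|Complex.normSq z - Complex.normSq τ| + |z.re - τ.re|) := by ring
      _ ≤ _ := by gcongr
  have hp : 0 < δ * Nq q := by positivity
  have hd := abs_le.1 hdiff
  rcases lt_or_gt_of_ne (hE q hq) with hneg | hpos
  · rw [abs_of_neg hneg] at h0
    have hz : Qell q z < 0 := by nlinarith
    rw [Real.sign_of_neg hneg, Real.sign_of_neg hz, abs_of_neg hz]
    exact ⟨by nlinarith, rfl⟩
  · rw [abs_of_pos hpos] at h0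
    have hz : 0 < Qell q z := by nlinarith
    rw [Real.sign_of_pos hpos, Real.sign_of_pos hz, abs_of_pos hz]
    exact ⟨by nlinarith, rfl⟩

theorem aux_norm_Qval {D : ℤ} {q : ℤ × ℤ × ℤ} (hq : q ∈ QD D) (z : ℂ) :
    Complex.normSq (Qval q z) = Qell q z ^ 2 + D * z.im ^ 2 := by
  have hdisc : (q.2.1 : ℝ) ^ 2 - 4 * q.1 * q.2.2 = D := by exact_mod_cast hq
  rw [← hdisc]
  simp only [Qval, Qell, Complex.normSq_apply, pow_two, Complex.add_re, Complex.add_im,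
    Complex.mul_re, Complex.mul_im, Complex.intCast_re, Complex.intCast_im]
  ring

theorem aux_norm_ge {D : ℤ} (hD : 0 < D) {q : ℤ × ℤ × ℤ} (hq : q ∈ QD D) (z : ℂ) :
    |Qell q z| ≤ ‖Qval q z‖ := by
  have hDr : (0:ℝ) < D := by exact_mod_cast hD
  apply abs_le_of_sq_le_sq _ (norm_nonneg _)
  rw [← Complex.normSq_eq_norm_sq, aux_norm_Qval hq]
  nlinarith [mul_nonneg hDr.le (sq_nonneg z.im)]


open Complex in
/-- Real differentiability with prescribed Wirtinger derivatives. -/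
def HasW (G : ℂ → ℂ) (α β z : ℂ) : Prop :=
  HasFDerivAt G (α • (ContinuousLinearMap.id ℝ ℂ) + β • (Complex.conjCLE : ℂ →L[ℝ] ℂ)) z

theorem HasW.dxx_eq {G : ℂ → ℂ} {α β z : ℂ} (h : HasW G α β z) : dxx G z = α + β := by
  unfold dxx
  have h1 : HasDerivAt (fun x : ℝ => (x : ℂ) + (z.im : ℂ) * Complex.I) 1 z.re :=
    (Complex.ofRealCLM.hasDerivAt).add_const _
  have h' : HasFDerivAt G (α • (ContinuousLinearMap.id ℝ ℂ) +
      β • (Complex.conjCLE : ℂ →L[ℝ] ℂ)) ((z.re : ℂ) + (z.im : ℂ) * Complex.I) := by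
    rw [Complex.re_add_im]; exact h
  have := (HasFDerivAt.comp_hasDerivAt z.re h' h1).deriv
  simpa [Function.comp_def] using this

theorem HasW.dyy_eq {G : ℂ → ℂ} {α β z : ℂ} (h : HasW G α β z) :
    dyy G z = Complex.I * (α - β) := by
  unfold dyy
  have h1 : HasDerivAt (fun y : ℝ => (z.re : ℂ) + (y : ℂ) * Complex.I) (1 * Complex.I) z.im :=
    ((Complex.ofRealCLM.hasDerivAt).mul_const _).const_add _
  have h' : HasFDerivAt G (α • (ContinuousLinearMap.id ℝ ℂ) +
      β • (Complex.conjCLE : ℂ →L[ℝ] ℂ)) ((z.re : ℂ) + (z.im : ℂ) * Complex.I) := by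
    rw [Complex.re_add_im]; exact h
  have := (HasFDerivAt.comp_hasDerivAt z.im h' h1).deriv
  simp only [Function.comp_def] at this
  rw [this]
  simp
  ring

theorem HasW.wirD_eq {G : ℂ → ℂ} {α β z : ℂ} (h : HasW G α β z) : wirD G z = α := by
  unfold wirD
  rw [h.dxx_eq, h.dyy_eq]
  linear_combination (-(α - β) / 2) * Complex.I_sq

theorem HasW.wirDbar_eq {G : ℂ → ℂ} {α β z : ℂ} (h : HasW G α β z) : wirDbar G z = β := by
  unfold wirDbar
  rw [h.dxx_eq, h.dyy_eq]
  linear_combination ((α - β) / 2) * Complex.I_sq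

theorem HasW.of_hasDerivAt {G : ℂ → ℂ} {α z : ℂ} (h : HasDerivAt G α z) : HasW G α 0 z := by
  unfold HasW
  have := h.hasFDerivAt.restrictScalars ℝ
  refine this.congr_fderiv ?_
  ext; simp [mul_comm]

theorem HasW.hasDerivAt {G : ℂ → ℂ} {α z : ℂ} (h : HasW G α 0 z) : HasDerivAt G α z := by
  unfold HasW at h
  rw [hasDerivAt_iff_hasFDerivAt]
  refine hasFDerivAt_of_restrictScalars ℝ h ?_
  ext; simp [mul_comm]

theorem HasW.conj_of_hasDerivAt {G : ℂ → ℂ} {α z : ℂ} (h : HasDerivAt G α z) :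
    HasW (fun w => (starRingEnd ℂ) (G w)) 0 ((starRingEnd ℂ) α) z := by
  unfold HasW
  have := h.hasFDerivAt.restrictScalars ℝ
  have h2 := (Complex.conjCLE : ℂ →L[ℝ] ℂ).hasFDerivAt.comp z this
  refine h2.congr_fderiv ?_
  ext; simp [mul_comm]

theorem HasW.mul {F G : ℂ → ℂ} {α β α' β' z : ℂ} (h : HasW F α β z) (h' : HasW G α' β' z) :
    HasW (fun w => F w * G w) (α * G z + F z * α') (β * G z + F z * β') z := by
  unfold HasW at *
  refine (HasFDerivAt.mul h h').congr_fderiv ?_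
  ext; simp; ring

theorem HasW.add {F G : ℂ → ℂ} {α β α' β' z : ℂ} (h : HasW F α β z) (h' : HasW G α' β' z) :
    HasW (fun w => F w + G w) (α + α') (β + β') z := by
  unfold HasW at *
  refine (HasFDerivAt.add h h').congr_fderiv ?_
  ext; simp; ring

theorem HasW.sub {F G : ℂ → ℂ} {α β α' β' z : ℂ} (h : HasW F α β z) (h' : HasW G α' β' z) :
    HasW (fun w => F w - G w) (α - α') (β - β') z := by
  unfold HasW at *
  refine (HasFDerivAt.sub h h').congr_fderiv ?_
  ext; simp; ring

theorem HasW.const_mul {F : ℂ → ℂ} {α β z : ℂ} (c : ℂ) (h : HasW F α β z) :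
    HasW (fun w => c * F w) (c * α) (c * β) z := by
  have := (HasW.of_hasDerivAt (hasDerivAt_const z c)).mul h
  simpa using this

theorem HasW.sum {ι : Type*} (s : Finset ι) {F : ι → ℂ → ℂ} {α β : ι → ℂ} {z : ℂ}
    (h : ∀ i ∈ s, HasW (F i) (α i) (β i) z) :
    HasW (fun w => ∑ i ∈ s, F i w) (∑ i ∈ s, α i) (∑ i ∈ s, β i) z := by
  classical
  induction s using Finset.induction_on with
  | empty => simpa using HasW.of_hasDerivAt (hasDerivAt_const z (0:ℂ))
  | insert a s ha ih =>
    simp only [Finset.sum_insert ha]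
    exact (h a (Finset.mem_insert_self _ _)).add
      (ih fun i hi => h i (Finset.mem_insert_of_mem hi))

theorem HasW.congr {F G : ℂ → ℂ} {α β z : ℂ} (h : HasW F α β z) {U : Set ℂ} (hU : IsOpen U)
    (hz : z ∈ U) (he : ∀ w ∈ U, G w = F w) : HasW G α β z :=
  HasFDerivAt.congr_of_eventuallyEq h (Filter.eventuallyEq_of_mem (hU.mem_nhds hz) he)

theorem HasW.congr_val {F : ℂ → ℂ} {α β α' β' z : ℂ} (h : HasW F α β z) (h1 : α = α')
    (h2 : β = β') : HasW F α' β' z := by rw [← h1, ← h2]; exact h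

theorem W1 {ι : Type*} (s : Finset ι) {U : Set ℂ} (hU : IsOpen U) {G : ℂ → ℂ}
    {h A : ι → ℂ → ℂ} (hh : ∀ i, DifferentiableOn ℂ (h i) U)
    (hA : ∀ i, DifferentiableOn ℂ (A i) U)
    (hG : ∀ z ∈ U, G z = ∑ i ∈ s, h i z * (starRingEnd ℂ) (A i z)) {z : ℂ} (hz : z ∈ U) :
    HasW G (∑ i ∈ s, deriv (h i) z * (starRingEnd ℂ) (A i z))
      (∑ i ∈ s, h i z * (starRingEnd ℂ) (deriv (A i) z)) z := by
  refine HasW.congr (HasW.sum s fun i _ => ?_) hU hz hG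
  have h1 := HasW.of_hasDerivAt ((hh i).differentiableAt (hU.mem_nhds hz)).hasDerivAt
  have h2 := HasW.conj_of_hasDerivAt ((hA i).differentiableAt (hU.mem_nhds hz)).hasDerivAt
  exact (h1.mul h2).congr_val (by simp) (by simp)

theorem diffOn_iter {h : ℂ → ℂ} {U : Set ℂ} (hU : IsOpen U) (hh : DifferentiableOn ℂ h U) (n : ℕ) :
    DifferentiableOn ℂ (iteratedDeriv n h) U := by
  induction n with
  | zero => simpa using hh
  | succ n ih => rw [iteratedDeriv_succ]; exact ih.deriv hU

theorem W2 {ι : Type*} (s : Finset ι) {U : Set ℂ} (hU : IsOpen U) {G : ℂ → ℂ}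
    {h A : ι → ℂ → ℂ} (hh : ∀ i, DifferentiableOn ℂ (h i) U)
    (hA : ∀ i, DifferentiableOn ℂ (A i) U)
    (hG : ∀ z ∈ U, G z = ∑ i ∈ s, h i z * (starRingEnd ℂ) (A i z)) (n : ℕ) :
    ∀ z ∈ U, (Dop^[n] G) z = (1 / (2 * (Real.pi : ℂ) * Complex.I)) ^ n *
      ∑ i ∈ s, iteratedDeriv n (h i) z * (starRingEnd ℂ) (A i z) := by
  induction n with
  | zero => simpa using hG
  | succ n ih =>
    intro z hz
    rw [Function.iterate_succ_apply']
    have := W1 s hU (G := Dop^[n] G)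
      (h := fun i z => (1 / (2 * (Real.pi : ℂ) * Complex.I)) ^ n * iteratedDeriv n (h i) z)
      (A := A) (fun i => (diffOn_iter hU (hh i) n).const_mul _) hA (by
        intro z hz
        rw [ih z hz, Finset.mul_sum]
        exact Finset.sum_congr rfl fun i _ => by ring) hz
    simp only [Dop]
    rw [this.wirD_eq, pow_succ', mul_assoc (1 / (2 * (Real.pi : ℂ) * Complex.I))]
    congr 1
    rw [Finset.mul_sum]
    refine Finset.sum_congr rfl fun i _ => ?_
    rw [deriv_const_mul_field', iteratedDeriv_succ]
    simp only [Pi.smul_apply, smul_eq_mul]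
    ring

theorem W3 {ι : Type*} (s : Finset ι) {U : Set ℂ} (hU : IsOpen U) {G : ℂ → ℂ}
    {h A : ι → ℂ → ℂ} (hh : ∀ i, DifferentiableOn ℂ (h i) U)
    (hA : ∀ i, DifferentiableOn ℂ (A i) U)
    (hG : ∀ z ∈ U, G z = ∑ i ∈ s, h i z * (starRingEnd ℂ) (A i z)) {z : ℂ} (hz : z ∈ U) :
    dxx (fun z => dxx G z) z + dyy (fun z => dyy G z) z =
      4 * ∑ i ∈ s, deriv (h i) z * (starRingEnd ℂ) (deriv (A i) z) := by
  have hh' : ∀ i, DifferentiableOn ℂ (deriv (h i)) U := fun i => (hh i).deriv hU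
  have hA' : ∀ i, DifferentiableOn ℂ (deriv (A i)) U := fun i => (hA i).deriv hU
  have H1 := W1 s hU (G := fun z => ∑ i ∈ s, deriv (h i) z * (starRingEnd ℂ) (A i z)) hh' hA
    (fun _ _ => rfl) hz
  have H2 := W1 s hU (G := fun z => ∑ i ∈ s, h i z * (starRingEnd ℂ) (deriv (A i) z)) hh hA'
    (fun _ _ => rfl) hz
  have Hx := (H1.add H2).congr hU hz (G := fun z => dxx G z)
    (fun w hw => (W1 s hU hh hA hG hw).dxx_eq)
  have Hy := ((H1.sub H2).const_mul Complex.I).congr hU hz (G := fun z => dyy G z)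
    (fun w hw => (W1 s hU hh hA hG hw).dyy_eq)
  rw [Hx.dxx_eq, Hy.dyy_eq]
  generalize ∑ i ∈ s, deriv (h i) z * (starRingEnd ℂ) (deriv (A i) z) = Y
  generalize ∑ i ∈ s, deriv (deriv (h i)) z * (starRingEnd ℂ) (A i z) = X
  generalize ∑ i ∈ s, h i z * (starRingEnd ℂ) (deriv (deriv (A i)) z) = Z
  linear_combination (X - Y - (Y - Z)) * Complex.I_sq


theorem bol_hasDeriv_iter {h : ℂ → ℂ} {U : Set ℂ} (hU : IsOpen U) (hh : DifferentiableOn ℂ h U)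
    (n : ℕ) {z : ℂ} (hz : z ∈ U) :
    HasDerivAt (iteratedDeriv n h) (iteratedDeriv (n + 1) h z) z := by
  rw [iteratedDeriv_succ]
  exact ((diffOn_iter hU hh n).differentiableAt (hU.mem_nhds hz)).hasDerivAt

theorem bol_eq_deriv {A B : ℂ → ℂ} {U : Set ℂ} (hU : IsOpen U) (h : ∀ z ∈ U, A z = B z) {z : ℂ}
    (hz : z ∈ U) {a b : ℂ} (hA : HasDerivAt A a z) (hB : HasDerivAt B b z) : a = b :=
  (hA.congr_of_eventuallyEq (Filter.eventuallyEq_of_mem (hU.mem_nhds hz)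
    fun w hw => (h w hw).symm)).unique hB

theorem bol_quad (a b c z : ℂ) : HasDerivAt (fun z : ℂ => a * z ^ 2 + b * z + c) (2 * a * z + b) z := by
  have := ((((hasDerivAt_id z).pow 2).const_mul a).add ((hasDerivAt_id z).const_mul b)).add_const c
  refine this.congr_deriv ?_
  simp; ring

theorem bol_lin (a b z : ℂ) : HasDerivAt (fun z : ℂ => 2 * a * z + b) (2 * a) z := by
  simpa using ((hasDerivAt_id z).const_mul (2 * a)).add_const b

theorem bol_P (n j : ℕ) (w z : ℂ) :
    HasDerivAt (fun z : ℂ => (n.descFactorial j : ℂ) * (z - w) ^ (n - j))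
      ((n.descFactorial (j + 1) : ℂ) * (z - w) ^ (n - (j + 1))) z := by
  have := ((((hasDerivAt_id z).sub_const w).pow (n - j)).const_mul (n.descFactorial j : ℂ))
  refine this.congr_deriv ?_
  rw [Nat.descFactorial_succ, Nat.sub_sub]
  simp only [id, Nat.cast_mul]
  ring

theorem bol_rel (a b c w : ℂ) (m n : ℕ) {U : Set ℂ} (hU : IsOpen U) {h : ℂ → ℂ}
    (hh : DifferentiableOn ℂ h U)
    (hode : ∀ z ∈ U, (a * z ^ 2 + b * z + c) * deriv h z - m * (2 * a * z + b) * h z = (z - w) ^ n)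
    (j : ℕ) : ∀ z ∈ U, (a * z ^ 2 + b * z + c) * iteratedDeriv (j + 2) h z +
      ((j : ℂ) + 1 - m) * (2 * a * z + b) * iteratedDeriv (j + 1) h z +
      ((j : ℂ) + 1) * ((j : ℂ) / 2 - m) * (2 * a) * iteratedDeriv j h z =
      (n.descFactorial (j + 1) : ℂ) * (z - w) ^ (n - (j + 1)) := by
  induction j with
  | zero =>
    intro z hz
    have H := bol_eq_deriv hU (A := fun z => (a * z ^ 2 + b * z + c) * iteratedDeriv 1 h z -
      m * ((2 * a * z + b) * iteratedDeriv 0 h z)) (B := fun z : ℂ => (n.descFactorial 0 : ℂ) * (z - w) ^ (n - 0))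
      (fun z hz => by simpa [mul_assoc] using hode z hz) hz
      (((bol_quad a b c z).mul (bol_hasDeriv_iter hU hh 1 hz)).sub
        (((bol_lin a b z).mul (bol_hasDeriv_iter hU hh 0 hz)).const_mul _)) (bol_P n 0 w z)
    rw [← H]; push_cast; ring
  | succ j ih =>
    intro z hz
    have H := bol_eq_deriv hU (A := fun z => (a * z ^ 2 + b * z + c) * iteratedDeriv (j + 2) h z +
      ((j : ℂ) + 1 - m) * ((2 * a * z + b) * iteratedDeriv (j + 1) h z) +
      (((j : ℂ) + 1) * ((j : ℂ) / 2 - m) * (2 * a)) * iteratedDeriv j h z)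
      (B := fun z : ℂ => (n.descFactorial (j+1) : ℂ) * (z - w) ^ (n - (j+1)))
      (fun z hz => by rw [← ih z hz]; ring) hz
      ((((bol_quad a b c z).mul (bol_hasDeriv_iter hU hh (j + 2) hz)).add
        (((bol_lin a b z).mul (bol_hasDeriv_iter hU hh (j+1) hz)).const_mul _)).add
        ((bol_hasDeriv_iter hU hh j hz).const_mul _)) (bol_P n (j+1) w z)
    rw [← H]; push_cast; ring

/-- vanishing at w -/
theorem bol_vanish (a b c w : ℂ) (m n : ℕ) {U : Set ℂ} (hU : IsOpen U) {h : ℂ → ℂ}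
    (hh : DifferentiableOn ℂ h U) (hw : w ∈ U) (hQ : a * w ^ 2 + b * w + c ≠ 0)
    (hode : ∀ z ∈ U, (a * z ^ 2 + b * z + c) * deriv h z - m * (2 * a * z + b) * h z = (z - w) ^ n)
    (h0 : h w = 0) (j : ℕ) (hj : j ≤ n) : iteratedDeriv j h w = 0 := by
  induction j using Nat.strong_induction_on with
  | _ j ih =>
    match j with
    | 0 => simpa using h0
    | 1 =>
      have := hode w hw
      rw [h0, sub_self, zero_pow (by omega)] at this
      simpa [hQ] using this
    | j + 2 =>
      have := bol_rel a b c w m n hU hh hode j w hw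
      rw [ih (j + 1) (by omega) (by omega), ih j (by omega) (by omega), sub_self,
        zero_pow (by omega)] at this
      simpa [hQ] using this

theorem bol_const (a b c w : ℂ) (m : ℕ) {U : Set ℂ} (hU : IsOpen U) (hUc : IsPreconnected U)
    {h : ℂ → ℂ} (hh : DifferentiableOn ℂ h U) (hw : w ∈ U)
    (hQ : ∀ z ∈ U, a * z ^ 2 + b * z + c ≠ 0)
    (hode : ∀ z ∈ U, (a * z ^ 2 + b * z + c) * deriv h z - m * (2 * a * z + b) * h z
      = (z - w) ^ (2 * m))
    (h0 : h w = 0) {z : ℂ} (hz : z ∈ U) :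
    (a * z ^ 2 + b * z + c) ^ (m + 1) * iteratedDeriv (2 * m + 1) h z =
      (2 * m).factorial * (a * w ^ 2 + b * w + c) ^ m := by
  set g : ℂ → ℂ := fun z => (a * z ^ 2 + b * z + c) ^ (m + 1) * iteratedDeriv (2 * m + 1) h z
    with hg
  have hder : ∀ z ∈ U, HasDerivAt g 0 z := by
    intro z hz
    have h1 := ((bol_quad a b c z).pow (m + 1)).mul (bol_hasDeriv_iter hU hh (2 * m + 1) hz)
    refine h1.congr_deriv ?_
    have h2 := bol_rel a b c w m (2 * m) hU hh hode (2 * m) z hz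
    rw [Nat.descFactorial_of_lt (by omega)] at h2
    push_cast at h2 ⊢
    simp only [Nat.add_sub_cancel, Pi.pow_apply]
    linear_combination (a * z ^ 2 + b * z + c) ^ m * h2
  have hconst := hU.is_const_of_deriv_eq_zero hUc
    (fun z hz => (hder z hz).differentiableAt.differentiableWithinAt)
    (fun z hz => (hder z hz).deriv) hz hw
  have hgw : g w = (2 * m).factorial * (a * w ^ 2 + b * w + c) ^ m := by
    have hQw := hQ w hw
    simp only [hg]
    rcases m with _ | m
    · have := hode w hw
      simp at this ⊢
      simpa using this
    · have h2 := bol_rel a b c w (m + 1) (2 * (m + 1)) hU hh hode (2 * m + 1) w hw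
      rw [bol_vanish a b c w (m + 1) _ hU hh hw hQw hode h0 (2 * m + 1 + 1) (by omega),
        bol_vanish a b c w (m + 1) _ hU hh hw hQw hode h0 (2 * m + 1) (by omega),
        show 2 * m + 1 + 1 = 2 * (m + 1) by ring, Nat.descFactorial_self] at h2
      simp only [Nat.sub_self, pow_zero, mul_zero, add_zero, mul_one] at h2
      rw [← h2, show 2 * m + 1 + 2 = 2 * (m + 1) + 1 by ring]
      ring
  exact hconst.trans hgw

theorem bol_quad_pow (a b c : ℂ) (m : ℕ) (z : ℂ) :
    iteratedDeriv (2 * m + 1) (fun z : ℂ => (a * z ^ 2 + b * z + c) ^ m) z = 0 := by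
  set p : Polynomial ℂ := (Polynomial.C a * Polynomial.X ^ 2 + Polynomial.C b * Polynomial.X +
    Polynomial.C c) ^ m with hp
  have h1 : (fun z : ℂ => (a * z ^ 2 + b * z + c) ^ m) = fun z => p.eval z := by
    ext z; simp [hp]
  have h2 : ∀ j : ℕ, iteratedDeriv j (fun z => p.eval z) =
      fun z => (Polynomial.derivative^[j] p).eval z := by
    intro j
    induction j with
    | zero => simp
    | succ j ih =>
      rw [iteratedDeriv_succ, ih, Function.iterate_succ_apply']
      ext z; exact Polynomial.deriv _
  rw [h1, h2, Polynomial.iterate_derivative_eq_zero]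
  · simp
  · have : p.natDegree ≤ m * 2 := by
      refine Polynomial.natDegree_pow_le.trans ?_
      gcongr
      exact Polynomial.natDegree_quadratic_le
    omega

theorem bol_quad_deriv_pow (a b c : ℂ) (m : ℕ) (z : ℂ) :
    (a * z ^ 2 + b * z + c) * deriv (fun z : ℂ => (a * z ^ 2 + b * z + c) ^ m) z -
      m * (2 * a * z + b) * (a * z ^ 2 + b * z + c) ^ m = 0 := by
  rw [((bol_quad a b c z).fun_pow m).deriv]
  rcases m with _ | m
  · simp
  · simp only [Nat.add_sub_cancel]; ring

/-- Bol's identity for the inhomogeneous equation, on a ball. -/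
theorem bol_main (a b c w τ : ℂ) (r : ℝ) (hr : 0 < r) (m : ℕ) {h : ℂ → ℂ}
    (hh : DifferentiableOn ℂ h (Metric.ball τ r))
    (hQ : ∀ z ∈ Metric.ball τ r, a * z ^ 2 + b * z + c ≠ 0)
    (hode : ∀ z ∈ Metric.ball τ r,
      (a * z ^ 2 + b * z + c) * deriv h z - m * (2 * a * z + b) * h z = (z - w) ^ (2 * m))
    {z : ℂ} (hz : z ∈ Metric.ball τ r) :
    (a * z ^ 2 + b * z + c) ^ (m + 1) * iteratedDeriv (2 * m + 1) h z =
      (2 * m).factorial * (a * w ^ 2 + b * w + c) ^ m := by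
  set U := Metric.ball τ r with hUdef
  have hU : IsOpen U := Metric.isOpen_ball
  have hUc : IsPreconnected U := (convex_ball τ r).isPreconnected
  have hQd : ∀ z, HasDerivAt (fun z : ℂ => a * z ^ 2 + b * z + c) (2 * a * z + b) z :=
    bol_quad a b c
  -- primitives
  have hprim : ∀ j : ℕ, ∃ φ : ℂ → ℂ, ∀ z ∈ U,
      HasDerivAt φ (z ^ j * ((a * z ^ 2 + b * z + c) ^ (m + 1))⁻¹) z := by
    intro j
    have hd : DifferentiableOn ℂ (fun z : ℂ => z ^ j * ((a * z ^ 2 + b * z + c) ^ (m + 1))⁻¹) U := by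
      intro z hz
      have h1 : DifferentiableAt ℂ (fun z : ℂ => z ^ j) z := by fun_prop
      have h2 : DifferentiableAt ℂ (fun z : ℂ => (a * z ^ 2 + b * z + c) ^ (m + 1)) z := by fun_prop
      exact (h1.mul (h2.inv (pow_ne_zero _ (hQ z hz)))).differentiableWithinAt
    obtain ⟨φ, -, h⟩ := (hd.isExactOn_ball).with_val_at τ 0
    exact ⟨φ, h⟩
  choose φ hφ using hprim
  -- solution for the source with parameter v
  set S : ℂ → ℂ → ℂ := fun v z => ∑ j ∈ Finset.range (2 * m + 1),
    (-v) ^ (2 * m - j) * ((2 * m).choose j : ℂ) * φ j z with hS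
  have hSd : ∀ v, ∀ z ∈ U, HasDerivAt (S v)
      ((z - v) ^ (2 * m) * ((a * z ^ 2 + b * z + c) ^ (m + 1))⁻¹) z := by
    intro v z hz
    have h1 : HasDerivAt (S v) _ z := HasDerivAt.fun_sum (u := Finset.range (2 * m + 1))
      (fun j _ => (hφ j z hz).const_mul ((-v) ^ (2 * m - j) * ((2 * m).choose j : ℂ)))
    refine h1.congr_deriv ?_
    rw [sub_eq_add_neg, add_pow z (-v), Finset.sum_mul]
    exact Finset.sum_congr rfl fun j _ => by ring
  set H : ℂ → ℂ → ℂ → ℂ := fun v e z => (a * z ^ 2 + b * z + c) ^ m * (S v z + e) with hH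
  have hHd : ∀ v e, ∀ z ∈ U, HasDerivAt (H v e) ((m : ℂ) * (a * z ^ 2 + b * z + c) ^ (m - 1) *
      (2 * a * z + b) * (S v z + e) + (a * z ^ 2 + b * z + c) ^ m *
      ((z - v) ^ (2 * m) * ((a * z ^ 2 + b * z + c) ^ (m + 1))⁻¹)) z := by
    intro v e z hz
    exact ((hQd z).pow m).mul ((hSd v z hz).add_const e)
  have hHode : ∀ v e, ∀ z ∈ U, (a * z ^ 2 + b * z + c) * deriv (H v e) z -
      m * (2 * a * z + b) * H v e z = (z - v) ^ (2 * m) := by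
    intro v e z hz
    rw [(hHd v e z hz).deriv]
    have hne := hQ z hz
    simp only [hH]
    generalize a * z ^ 2 + b * z + c = q at hne ⊢
    rcases m with _ | m
    · field_simp; simp
    · simp only [Nat.add_sub_cancel]; field_simp; ring
  have hHD : ∀ v e, DifferentiableOn ℂ (H v e) U := fun v e z hz =>
    (hHd v e z hz).differentiableAt.differentiableWithinAt
  -- iterated derivatives of H, linear in parameters
  have hψD : ∀ j, ContDiffOn ℂ ((2 * m + 1 : ℕ) : WithTop ℕ∞) (fun z => (a * z ^ 2 + b * z + c) ^ m * φ j z) U := by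
    intro j
    refine DifferentiableOn.contDiffOn (fun z hz => ?_) hU
    exact (((hQd z).pow m).mul (hφ j z hz)).differentiableAt.differentiableWithinAt
  have hiter : ∀ v e, iteratedDeriv (2 * m + 1) (H v e) z = ∑ j ∈ Finset.range (2 * m + 1),
      (-v) ^ (2 * m - j) * ((2 * m).choose j : ℂ) *
        iteratedDeriv (2 * m + 1) (fun z => (a * z ^ 2 + b * z + c) ^ m * φ j z) z := by
    intro v e
    have hcd : ∀ j, ContDiffAt ℂ ((2 * m + 1 : ℕ) : WithTop ℕ∞)
        (fun z => (a * z ^ 2 + b * z + c) ^ m * φ j z) z := fun j =>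
      (hψD j).contDiffAt (hU.mem_nhds hz)
    have h1 : H v e = fun z => (∑ j ∈ Finset.range (2 * m + 1),
      ((-v) ^ (2 * m - j) * ((2 * m).choose j : ℂ)) * ((a * z ^ 2 + b * z + c) ^ m * φ j z)) +
        e * (a * z ^ 2 + b * z + c) ^ m := by
      ext z
      simp only [hH, hS, mul_add, Finset.mul_sum]
      congr 1
      · exact Finset.sum_congr rfl fun j _ => by ring
      · ring
    rw [h1, iteratedDeriv_fun_add, iteratedDeriv_fun_sum, iteratedDeriv_const_mul_field,
      bol_quad_pow, mul_zero, add_zero]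
    · refine Finset.sum_congr rfl fun j _ => ?_
      rw [iteratedDeriv_const_mul_field]
    · intro j _
      exact contDiffAt_const.mul (hcd j)
    · refine ContDiffAt.sum fun j _ => ?_
      exact contDiffAt_const.mul (hcd j)
    · fun_prop
  -- polynomial identity in v
  set p : Polynomial ℂ := Polynomial.C ((a * z ^ 2 + b * z + c) ^ (m + 1)) *
    (∑ j ∈ Finset.range (2 * m + 1), (-Polynomial.X) ^ (2 * m - j) *
      Polynomial.C (((2 * m).choose j : ℂ) *
        iteratedDeriv (2 * m + 1) (fun z => (a * z ^ 2 + b * z + c) ^ m * φ j z) z)) -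
    Polynomial.C ((2 * m).factorial : ℂ) * (Polynomial.C a * Polynomial.X ^ 2 +
      Polynomial.C b * Polynomial.X + Polynomial.C c) ^ m with hp
  have hpe : ∀ v e, p.eval v = (a * z ^ 2 + b * z + c) ^ (m + 1) *
      iteratedDeriv (2 * m + 1) (H v e) z - (2 * m).factorial * (a * v ^ 2 + b * v + c) ^ m := by
    intro v e
    rw [hiter v e, hp]
    simp [Polynomial.eval_finsetSum, mul_assoc]
  have hpz : p = 0 := by
    refine Polynomial.eq_zero_of_infinite_isRoot p (Set.Infinite.mono (s := U) ?_ ?_)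
    · intro v hv
      have hv0 : H v (-S v v) v = 0 := by simp [hH]
      have := bol_const a b c v m hU hUc (hHD v (-S v v)) hv hQ (hHode v _) hv0 hz
      change p.eval v = 0
      rw [hpe v (-S v v), this, sub_self]
    · exact infinite_of_mem_nhds τ (Metric.ball_mem_nhds τ hr)
  -- uniqueness
  have huniq : ∃ e, ∀ x ∈ U, h x = H w e x := by
    set g : ℂ → ℂ := fun x => h x * ((a * x ^ 2 + b * x + c) ^ m)⁻¹ - S w x with hg
    have hgd : ∀ x ∈ U, HasDerivAt g 0 x := by
      intro x hx
      have hne := hQ x hx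
      have h1 := ((hh.differentiableAt (hU.mem_nhds hx)).hasDerivAt.mul
        (((hQd x).pow m).inv (pow_ne_zero m hne))).sub (hSd w x hx)
      refine h1.congr_deriv ?_
      have h2 := hode x hx
      rw [← h2]
      simp only [Pi.inv_apply, Pi.pow_apply]
      generalize a * x ^ 2 + b * x + c = q at hne ⊢
      rcases m with _ | m
      · field_simp; simp
      · simp only [Nat.add_sub_cancel]; field_simp; ring
    have hc : ∀ x ∈ U, g x = g τ := fun x hx => hU.is_const_of_deriv_eq_zero hUc
      (fun z hz => (hgd z hz).differentiableAt.differentiableWithinAt)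
      (fun z hz => (hgd z hz).deriv) hx (Metric.mem_ball_self hr)
    refine ⟨g τ, fun x hx => ?_⟩
    have hne := pow_ne_zero m (hQ x hx)
    rw [← hc x hx]
    simp only [hH, hg]
    generalize (a * x ^ 2 + b * x + c) ^ m = q at hne ⊢
    field_simp; ring
  obtain ⟨e, he⟩ := huniq
  have h3 : iteratedDeriv (2 * m + 1) h z = iteratedDeriv (2 * m + 1) (H w e) z :=
    Filter.EventuallyEq.iteratedDeriv_eq _ (Filter.eventuallyEq_of_mem (hU.mem_nhds hz) he)
  have h4 := hpe w e
  rw [hpz, Polynomial.eval_zero] at h4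
  rw [h3]
  linear_combination -h4


theorem psi_rpow1 (m : ℕ) {v : ℝ} (hv : 0 < v) :
    v ^ (((m + 1 : ℕ) : ℝ) - 3 / 2) = v ^ m / Real.sqrt v := by
  rw [show (((m + 1 : ℕ) : ℝ) - 3 / 2) = (m : ℝ) - 1 / 2 by push_cast; ring, Real.rpow_sub hv,
    Real.rpow_natCast, Real.sqrt_eq_rpow]

theorem psi_rpow2 {v : ℝ} (hv : 0 < v) : v ^ (-(1:ℝ) / 2) = (Real.sqrt v)⁻¹ := by
  rw [show (-(1:ℝ) / 2) = -(1 / 2) by ring, Real.rpow_neg hv.le, Real.sqrt_eq_rpow]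

theorem psi_contOn (m : ℕ) (hm : 1 ≤ m) : ContinuousOn
    (fun u : ℝ => u ^ (((m + 1 : ℕ) : ℝ) - 3 / 2) * (1 - u) ^ (-(1:ℝ) / 2)) (Set.Iio 1) := by
  intro u hu
  have hu' : u < 1 := hu
  refine ContinuousAt.continuousWithinAt (ContinuousAt.mul ?_ ?_)
  · refine Real.continuousAt_rpow_const _ _ (Or.inr ?_)
    have : (1:ℝ) ≤ m := by exact_mod_cast hm
    push_cast; linarith
  · exact ContinuousAt.rpow_const (by fun_prop) (Or.inl (by linarith))

theorem psi_hasDerivAt (m : ℕ) (hm : 1 ≤ m) {v : ℝ} (hv : 0 < v) (hv1 : v < 1) :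
    HasDerivAt (psi (m + 1)) ((1 / 2) * (v ^ m / Real.sqrt v * (Real.sqrt (1 - v))⁻¹)) v := by
  have hc := psi_contOn m hm
  have h1 := intervalIntegral.integral_hasDerivAt_right (a := 0) (b := v)
    (f := fun u : ℝ => u ^ (((m + 1 : ℕ) : ℝ) - 3 / 2) * (1 - u) ^ (-(1:ℝ) / 2))
    (ContinuousOn.intervalIntegrable (hc.mono (by
      rw [Set.uIcc_of_le hv.le]; intro u hu; exact lt_of_le_of_lt hu.2 hv1)))
    (hc.stronglyMeasurableAtFilter isOpen_Iio v hv1)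
    (hc.continuousAt (isOpen_Iio.mem_nhds hv1))
  have h2 := h1.const_mul (1 / 2 : ℝ)
  refine h2.congr_deriv ?_
  rw [psi_rpow1 m hv, psi_rpow2 (by linarith)]

theorem psi_bound (m : ℕ) (hm : 1 ≤ m) {v : ℝ} (hv : 0 < v) (hv1 : v < 1) :
    |psi (m + 1) v| ≤ v ^ m * Real.sqrt v / Real.sqrt (1 - v) := by
  have hs : 0 < Real.sqrt v := Real.sqrt_pos.2 hv
  have hs1 : 0 < Real.sqrt (1 - v) := Real.sqrt_pos.2 (by linarith)
  have h := intervalIntegral.norm_integral_le_of_norm_le_const (a := 0) (b := v)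
    (f := fun u : ℝ => u ^ (((m + 1 : ℕ) : ℝ) - 3 / 2) * (1 - u) ^ (-(1:ℝ) / 2))
    (C := v ^ m / Real.sqrt v * (Real.sqrt (1 - v))⁻¹) (by
      intro u hu
      rw [Set.uIoc_of_le hv.le] at hu
      have hu0 := hu.1
      have hu1 := hu.2
      rw [← psi_rpow1 m hv, ← psi_rpow2 (by linarith), Real.norm_eq_abs, abs_mul,
        abs_of_nonneg (Real.rpow_nonneg hu0.le _), abs_of_nonneg (Real.rpow_nonneg (by linarith) _)]
      have : (1:ℝ) ≤ m := by exact_mod_cast hm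
      refine mul_le_mul ?_ ?_ (Real.rpow_nonneg (by linarith) _) (Real.rpow_nonneg hv.le _)
      · exact Real.rpow_le_rpow hu0.le hu1 (by push_cast; linarith)
      · exact Real.rpow_le_rpow_of_nonpos (by linarith) (by linarith) (by norm_num))
  unfold psi
  rw [abs_mul, ← Real.norm_eq_abs (∫ u in (0:ℝ)..v, _)]
  rw [sub_zero, abs_of_pos hv] at h
  have e : v ^ m / Real.sqrt v * (Real.sqrt (1 - v))⁻¹ * v =
      v ^ m * Real.sqrt v / Real.sqrt (1 - v) := by
    field_simp
    rw [Real.sq_sqrt hv.le]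
  rw [e] at h
  have h0 := norm_nonneg (∫ u in (0:ℝ)..v, u ^ (((m + 1 : ℕ) : ℝ) - 3 / 2) * (1 - u) ^ (-(1:ℝ) / 2))
  rw [abs_of_pos (by norm_num : (0:ℝ) < 1 / 2)]
  linarith

theorem HasW.comp_hol {G : ℂ → ℂ} {α β z f' : ℂ} {f : ℂ → ℂ} (h : HasW G α β z)
    (hf : HasDerivAt f f' (G z)) : HasW (fun w => f (G w)) (f' * α) (f' * β) z := by
  unfold HasW at *
  have := (hf.hasFDerivAt.restrictScalars ℝ).comp z h
  refine this.congr_fderiv ?_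
  ext; simp; ring

theorem HasW.comp_real {v : ℂ → ℝ} {α z : ℂ} {ψ : ℝ → ℝ} {ψ' : ℝ}
    (h : HasW (fun w => (v w : ℂ)) α ((starRingEnd ℂ) α) z) (hψ : HasDerivAt ψ ψ' (v z)) :
    HasW (fun w => (ψ (v w) : ℂ)) (ψ' * α) (ψ' * (starRingEnd ℂ) α) z := by
  unfold HasW at *
  have h1 : HasFDerivAt v _ z := Complex.reCLM.hasFDerivAt.comp z h
  have h2 := Complex.ofRealCLM.hasFDerivAt.comp z (hψ.hasFDerivAt.comp z h1)
  refine h2.congr_fderiv ?_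
  ext u
  refine Complex.ext ?_ ?_ <;> simp <;> ring

theorem HasW_im (z : ℂ) : HasW (fun w => (w.im : ℂ)) (-Complex.I / 2) (Complex.I / 2) z := by
  have h1 := HasW.of_hasDerivAt (hasDerivAt_id z)
  have h2 := HasW.conj_of_hasDerivAt (hasDerivAt_id z)
  have h3 := ((h1.sub h2).const_mul (-Complex.I / 2)).congr isOpen_univ (Set.mem_univ z)
    (G := fun w => (w.im : ℂ)) (by
      intro w _
      apply Complex.ext <;> simp; ring)
  exact h3.congr_val (by simp) (by simp; ring)

noncomputable def Qder (q : ℤ × ℤ × ℤ) (z : ℂ) : ℂ := 2 * (q.1 : ℂ) * z + (q.2.1 : ℂ)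

theorem Qval_hasDerivAt (q : ℤ × ℤ × ℤ) (z : ℂ) : HasDerivAt (Qval q) (Qder q z) z :=
  bol_quad _ _ _ z

theorem Q_ell_id (q : ℤ × ℤ × ℤ) (z : ℂ) :
    Qval q z - Complex.I * z.im * Qder q z = (Qell q z : ℂ) := by
  apply Complex.ext <;> simp [Qval, Qder, Qell, Complex.normSq_apply, pow_two] <;> ring

theorem form_v (q : ℤ × ℤ × ℤ) (D : ℤ) (z : ℂ) (hQ : Qval q z ≠ 0) :
    HasW (fun w => (((D : ℝ) * w.im ^ 2 / Complex.normSq (Qval q w) : ℝ) : ℂ))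
      (-Complex.I * D * z.im * Qell q z / (Qval q z ^ 2 * (starRingEnd ℂ) (Qval q z)))
      ((starRingEnd ℂ) (-Complex.I * D * z.im * Qell q z /
        (Qval q z ^ 2 * (starRingEnd ℂ) (Qval q z)))) z := by
  have hQc : (starRingEnd ℂ) (Qval q z) ≠ 0 := by simpa using hQ
  have h1 := HasW.of_hasDerivAt (Qval_hasDerivAt q z)
  have h2 := HasW.conj_of_hasDerivAt (Qval_hasDerivAt q z)
  have h3 := (h1.mul h2).comp_hol (f := fun x => x⁻¹) (hasDerivAt_inv (mul_ne_zero hQ hQc))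
  have h4 := (((HasW_im z).mul (HasW_im z)).const_mul (D : ℂ)).mul h3
  have h5 := h4.congr isOpen_univ (Set.mem_univ z)
    (G := fun w => (((D : ℝ) * w.im ^ 2 / Complex.normSq (Qval q w) : ℝ) : ℂ)) (by
      intro w _
      push_cast
      rw [← Complex.mul_conj]
      ring)
  have e1 := Q_ell_id q z
  have e2 := congrArg (starRingEnd ℂ) e1
  simp only [map_sub, map_mul, Complex.conj_I, Complex.conj_ofReal] at e2
  refine h5.congr_val ?_ ?_
  · rw [← e1]
    field_simp
    linear_combination (-2 * D * (z.im : ℂ) ^ 2 * (starRingEnd ℂ) (Qval q z) * Qder q z) *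
      Complex.I_sq
  · simp only [map_div₀, map_mul, map_neg, map_pow, Complex.conj_I, Complex.conj_ofReal,
      Complex.conj_conj, map_intCast]
    rw [← e2]
    field_simp
    linear_combination (-2 * D * (z.im : ℂ) ^ 2 * Qval q z * (starRingEnd ℂ) (Qder q z)) *
      Complex.I_sq

theorem form_vfacts {D : ℤ} (hD : 0 < D) {q : ℤ × ℤ × ℤ} (hq : q ∈ QD D) {z : ℂ}
    (hz : 0 < z.im) (hL : Qell q z ≠ 0) :
    0 < ‖Qval q z‖ ∧ 0 < (D : ℝ) * z.im ^ 2 / Complex.normSq (Qval q z) ∧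
    (D : ℝ) * z.im ^ 2 / Complex.normSq (Qval q z) < 1 ∧
    Real.sqrt ((D : ℝ) * z.im ^ 2 / Complex.normSq (Qval q z)) =
      Real.sqrt D * z.im / ‖Qval q z‖ ∧
    Real.sqrt (1 - (D : ℝ) * z.im ^ 2 / Complex.normSq (Qval q z)) =
      |Qell q z| / ‖Qval q z‖ := by
  have hN := aux_norm_Qval hq z
  have hL2 : 0 < Qell q z ^ 2 := by positivity
  have hD' : (0 : ℝ) < D := by exact_mod_cast hD
  have hDy : 0 < (D : ℝ) * z.im ^ 2 := by positivity
  have hNpos : 0 < Complex.normSq (Qval q z) := by rw [hN]; positivity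
  have hnorm : 0 < ‖Qval q z‖ := by
    rw [norm_pos_iff]; exact Complex.normSq_pos.1 hNpos
  have hNe : Complex.normSq (Qval q z) = ‖Qval q z‖ ^ 2 := Complex.normSq_eq_norm_sq _
  refine ⟨hnorm, by positivity, ?_, ?_, ?_⟩
  · rw [div_lt_one hNpos, hN]; linarith
  · rw [Real.sqrt_div hDy.le, hNe, Real.sqrt_sq hnorm.le, Real.sqrt_mul hD'.le, Real.sqrt_sq hz.le]
  · rw [show 1 - (D : ℝ) * z.im ^ 2 / Complex.normSq (Qval q z) =
      Qell q z ^ 2 / Complex.normSq (Qval q z) by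
        field_simp; rw [hN]; ring]
    rw [Real.sqrt_div hL2.le, hNe, Real.sqrt_sq hnorm.le, Real.sqrt_sq_eq_abs]

/-- Local form of the summand with a constant sign. -/
noncomputable def Gs (m : ℕ) (D : ℤ) (s : ℝ) (q : ℤ × ℤ × ℤ) (z : ℂ) : ℂ :=
  (s : ℂ) * Qval q z ^ m * ((psi (m + 1) ((D : ℝ) * z.im ^ 2 / Complex.normSq (Qval q z)) : ℝ) : ℂ)

theorem form_W {D : ℤ} (hD : 0 < D) {q : ℤ × ℤ × ℤ} (hq : q ∈ QD D) {z : ℂ}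
    (hz : 0 < z.im) (hL : Qell q z ≠ 0) (m : ℕ) (hm : 1 ≤ m) (s : ℝ)
    (hs : s * |Qell q z| = Qell q z) :
    ∃ α, HasW (Gs m D s q) α (Complex.I / 2 * (Real.sqrt D * D ^ m : ℝ) * (z.im : ℂ) ^ (2 * m) *
        ((starRingEnd ℂ) (Qval q z) ^ (m + 1))⁻¹) z ∧
      Qval q z * α - m * Qder q z * Gs m D s q z =
        -(Complex.I / 2 * (Real.sqrt D * D ^ m : ℝ) * (z.im : ℂ) ^ (2 * m) *
        ((starRingEnd ℂ) (Qval q z) ^ m)⁻¹) := by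
  obtain ⟨hn, hv0, hv1, hs1, hs2⟩ := form_vfacts hD hq hz hL
  have hQ : Qval q z ≠ 0 := norm_pos_iff.1 hn
  have hQc : (starRingEnd ℂ) (Qval q z) ≠ 0 := by simpa using hQ
  have hD' : (0 : ℝ) < D := by exact_mod_cast hD
  have hsD : 0 < Real.sqrt D := Real.sqrt_pos.2 hD'
  have hd := psi_hasDerivAt m hm hv0 hv1
  rw [hs1, hs2] at hd
  set ψ' : ℝ := 1 / 2 * (((D : ℝ) * z.im ^ 2 / Complex.normSq (Qval q z)) ^ m /
    (Real.sqrt D * z.im / ‖Qval q z‖) * (|Qell q z| / ‖Qval q z‖)⁻¹) with hψ'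
  have hkey : (s : ℂ) * ψ' * (2 * Real.sqrt D * z.im * Qell q z *
      (Qval q z * (starRingEnd ℂ) (Qval q z)) ^ m) =
      (D : ℂ) ^ m * (z.im : ℂ) ^ (2 * m) * (Qval q z * (starRingEnd ℂ) (Qval q z)) := by
    rw [Complex.mul_conj, Complex.normSq_eq_norm_sq]
    have hab : 0 < |Qell q z| := abs_pos.2 hL
    have : s * ψ' * (2 * Real.sqrt D * z.im * Qell q z * (‖Qval q z‖ ^ 2) ^ m) =
        (D : ℝ) ^ m * z.im ^ (2 * m) * ‖Qval q z‖ ^ 2 := by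
      have hsL : s * Qell q z = |Qell q z| := by
        have h1 : s * |Qell q z| * |Qell q z| = Qell q z * |Qell q z| := by rw [hs]
        rw [mul_assoc, abs_mul_abs_self] at h1
        have h2 : (s * Qell q z) * Qell q z = |Qell q z| * Qell q z := by linarith
        exact mul_right_cancel₀ hL h2
      rw [hψ', Complex.normSq_eq_norm_sq, div_pow, mul_pow, ← pow_mul]
      calc _ = (s * Qell q z) * ((D : ℝ) ^ m * z.im ^ (2 * m) * ‖Qval q z‖ ^ 2) / |Qell q z| := by
            field_simp
        _ = _ := by rw [hsL]; field_simp
    exact_mod_cast this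
  have h1 := (form_v q D z hQ).comp_real hd
  have h2 := HasW.of_hasDerivAt (((Qval_hasDerivAt q z).fun_pow m).const_mul (s : ℂ))
  have h3 := h2.mul h1
  have hz' : (z.im : ℂ) ≠ 0 := by exact_mod_cast hz.ne'
  have hL' : (Qell q z : ℂ) ≠ 0 := by exact_mod_cast hL
  have hsD' : (Real.sqrt D : ℂ) ≠ 0 := by exact_mod_cast hsD.ne'
  have hDD : (Real.sqrt D : ℂ) ^ 2 = D := by
    have := Real.sq_sqrt hD'.le
    exact_mod_cast this
  refine ⟨_, h3.congr_val rfl ?_, ?_⟩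
  · simp only [map_div₀, map_mul, map_neg, map_pow, Complex.conj_I, Complex.conj_ofReal,
      Complex.conj_conj, map_intCast]
    push_cast
    rw [mul_pow] at hkey
    have : (s : ℂ) * ψ' = (D : ℂ) ^ m * (z.im : ℂ) ^ (2 * m) *
      (Qval q z * (starRingEnd ℂ) (Qval q z)) / (2 * Real.sqrt D * z.im * Qell q z *
      (Qval q z ^ m * (starRingEnd ℂ) (Qval q z) ^ m)) := by
      rw [← hkey]; field_simp
    rw [zero_mul, zero_add, show ∀ A X : ℂ, (s : ℂ) * A * (ψ' * X) = (s * ψ') * A * X from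
      fun A X => by ring, this, ← hDD]
    field_simp
    ring
  · push_cast
    rw [mul_pow] at hkey
    have : (s : ℂ) * ψ' = (D : ℂ) ^ m * (z.im : ℂ) ^ (2 * m) *
      (Qval q z * (starRingEnd ℂ) (Qval q z)) / (2 * Real.sqrt D * z.im * Qell q z *
      (Qval q z ^ m * (starRingEnd ℂ) (Qval q z) ^ m)) := by
      rw [← hkey]; field_simp
    have e : ∀ A X : ℂ, (s : ℂ) * A * (ψ' * X) = (s * ψ') * A * X := fun A X => by ring
    rw [e, this, ← hDD]
    obtain ⟨m, rfl⟩ : ∃ n, m = n + 1 := ⟨m - 1, by omega⟩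
    simp only [Gs, Nat.add_sub_cancel]
    field_simp
    ring

theorem form_bound {D : ℤ} (hD : 0 < D) {q : ℤ × ℤ × ℤ} (hq : q ∈ QD D) {z : ℂ}
    (hz : 0 < z.im) (hL : Qell q z ≠ 0) (m : ℕ) (hm : 1 ≤ m) (s : ℝ) (hs : |s| ≤ 1) :
    ‖Gs m D s q z‖ ≤ (D : ℝ) ^ m * Real.sqrt D * z.im ^ (2 * m + 1) * (|Qell q z| ^ (m + 1))⁻¹ := by
  obtain ⟨hn, hv0, hv1, hs1, hs2⟩ := form_vfacts hD hq hz hL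
  have hb := psi_bound m hm hv0 hv1
  rw [hs1, hs2, Complex.normSq_eq_norm_sq] at hb
  have hge := aux_norm_ge hD hq z
  have hab : 0 < |Qell q z| := abs_pos.2 hL
  have hD' : (0 : ℝ) < D := by exact_mod_cast hD
  unfold Gs
  rw [norm_mul, norm_mul, norm_pow, Complex.norm_real, Complex.norm_real, Real.norm_eq_abs,
    Real.norm_eq_abs, Complex.normSq_eq_norm_sq]
  calc _ ≤ 1 * ‖Qval q z‖ ^ m * ((D * z.im ^ 2 / ‖Qval q z‖ ^ 2) ^ m *
          (√D * z.im / ‖Qval q z‖) / (|Qell q z| / ‖Qval q z‖)) := by gcongr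
    _ = (D : ℝ) ^ m * Real.sqrt D * z.im ^ (2 * m + 1) * (‖Qval q z‖ ^ m * |Qell q z|)⁻¹ := by
        rw [div_pow, mul_pow]; field_simp; ring
    _ ≤ _ := by
        rw [pow_succ (|Qell q z|)]
        gcongr


theorem binom0 (n : ℕ) (x u : ℂ) : ∑ j ∈ Finset.range (n + 1),
    ((n.choose j : ℂ) * (-1) ^ (n - j)) * x ^ j * u ^ (n - j) = (x - u) ^ n := by
  rw [sub_eq_add_neg, add_pow]
  refine Finset.sum_congr rfl fun j _ => ?_
  rw [neg_pow u]; ring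

theorem binom1 (n : ℕ) (x u : ℂ) : ∑ j ∈ Finset.range (n + 1),
    ((n.choose j : ℂ) * (-1) ^ (n - j)) * (j * x ^ (j - 1)) * u ^ (n - j) =
      n * (x - u) ^ (n - 1) := by
  have h1 : HasDerivAt (fun x : ℂ => ∑ j ∈ Finset.range (n + 1),
    ((n.choose j : ℂ) * (-1) ^ (n - j)) * x ^ j * u ^ (n - j)) _ x :=
    HasDerivAt.fun_sum (u := Finset.range (n + 1)) fun j _ =>
      ((hasDerivAt_pow j x).const_mul _).mul_const _
  have h2 : HasDerivAt (fun x : ℂ => (x - u) ^ n) _ x := ((hasDerivAt_id x).sub_const u).fun_pow n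
  simp only [binom0] at h1
  rw [h1.unique h2]; simp

theorem Qval_id (q : ℤ × ℤ × ℤ) (x u : ℂ) :
    2 * Qval q x - (x - u) * Qder q x = 2 * Qval q u + (x - u) * Qder q u := by
  simp only [Qval, Qder]; ring

theorem Qval_conj (q : ℤ × ℤ × ℤ) (z : ℂ) :
    (starRingEnd ℂ) (Qval q z) = Qval q ((starRingEnd ℂ) z) := by
  simp [Qval]

theorem Qder_conj (q : ℤ × ℤ × ℤ) (z : ℂ) :
    (starRingEnd ℂ) (Qder q z) = Qder q ((starRingEnd ℂ) z) := by
  simp only [Qder, map_add, map_mul, map_intCast, map_ofNat]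

theorem form_E (m : ℕ) (hm : 1 ≤ m) (q : ℤ × ℤ × ℤ) (τ : ℂ) (r : ℝ) (hr : 0 < r)
    (hQ : ∀ z ∈ Metric.ball τ r, Qval q z ≠ 0) (A : ℕ → ℂ → ℂ) (hA0 : ∀ j, A j τ = 0)
    (hA : ∀ j, ∀ z ∈ Metric.ball τ r, HasDerivAt (A j) (z ^ j * (Qval q z ^ (m + 1))⁻¹) z)
    (x u : ℂ) (hu : u ∈ Metric.ball τ r) :
    ∑ j ∈ Finset.range (2 * m + 1), (((2 * m).choose j : ℂ) * (-1) ^ (2 * m - j)) *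
      (Qval q x * (j * x ^ (j - 1)) - m * Qder q x * x ^ j) * A (2 * m - j) u =
    (x - τ) ^ (2 * m) * (Qval q τ ^ m)⁻¹ - (x - u) ^ (2 * m) * (Qval q u ^ m)⁻¹ := by
  set E : ℂ → ℂ := fun u => ∑ j ∈ Finset.range (2 * m + 1),
    (((2 * m).choose j : ℂ) * (-1) ^ (2 * m - j)) *
      (Qval q x * (j * x ^ (j - 1)) - m * Qder q x * x ^ j) * A (2 * m - j) u +
      (x - u) ^ (2 * m) * (Qval q u ^ m)⁻¹ with hE
  have hd : ∀ u ∈ Metric.ball τ r, HasDerivAt E 0 u := by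
    intro u hu
    have hne := hQ u hu
    have h1 : HasDerivAt E _ u := (HasDerivAt.fun_sum (u := Finset.range (2 * m + 1)) fun j _ =>
      (hA (2 * m - j) u hu).const_mul ((((2 * m).choose j : ℂ) * (-1) ^ (2 * m - j)) *
      (Qval q x * (j * x ^ (j - 1)) - m * Qder q x * x ^ j))).add
      ((((hasDerivAt_id u).const_sub x).fun_pow (2 * m)).mul
        (((Qval_hasDerivAt q u).fun_pow m).fun_inv (pow_ne_zero m hne)))
    refine h1.congr_deriv ?_
    have e1 : ∑ j ∈ Finset.range (2 * m + 1), (((2 * m).choose j : ℂ) * (-1) ^ (2 * m - j)) *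
      (Qval q x * (j * x ^ (j - 1)) - m * Qder q x * x ^ j) *
        (u ^ (2 * m - j) * (Qval q u ^ (m + 1))⁻¹) =
      (Qval q x * ((2 * m : ℕ) * (x - u) ^ (2 * m - 1)) - m * Qder q x * (x - u) ^ (2 * m)) *
        (Qval q u ^ (m + 1))⁻¹ := by
      rw [← binom0 (2 * m), ← binom1, Finset.mul_sum, Finset.mul_sum, ← Finset.sum_sub_distrib,
        Finset.sum_mul]
      exact Finset.sum_congr rfl fun j _ => by ring
    rw [e1]
    have e2 := Qval_id q x u
    obtain ⟨m, rfl⟩ : ∃ n, m = n + 1 := ⟨m - 1, by omega⟩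
    rw [show 2 * (m + 1) - 1 = 2 * m + 1 by omega, show 2 * (m + 1) = 2 * m + 1 + 1 by ring]
    simp only [Nat.add_sub_cancel, id]
    push_cast
    generalize Qval q u = Qu at *
    field_simp
    rw [pow_succ]
    linear_combination ((m + 1) * (x - u) ^ (2 * m + 1) * Qu ^ (2 * m + 2)) * e2
  have hc := Metric.isOpen_ball.is_const_of_deriv_eq_zero (convex_ball τ r).isPreconnected
    (fun z hz => (hd z hz).differentiableAt.differentiableWithinAt)
    (fun z hz => (hd z hz).deriv) hu (Metric.mem_ball_self hr)
  simp only [hE, hA0, mul_zero, Finset.sum_const_zero, zero_add] at hc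
  linear_combination hc

/-- The constant in front of the Eichler type sum. -/
noncomputable def c0 (m : ℕ) (D : ℤ) : ℂ :=
  Complex.I / 2 * (Real.sqrt D * D ^ m : ℝ) * ((2 * Complex.I) ^ (2 * m))⁻¹

/-- The holomorphic part. -/
noncomputable def hpart (m : ℕ) (D : ℤ) (s : ℝ) (q : ℤ × ℤ × ℤ) (A : ℕ → ℂ → ℂ) (z : ℂ) : ℂ :=
  Gs m D s q z - c0 m D * ∑ j ∈ Finset.range (2 * m + 1),
    (((2 * m).choose j : ℂ) * (-1) ^ (2 * m - j)) * z ^ j * (starRingEnd ℂ) (A (2 * m - j) z)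

theorem conj_im_id (z : ℂ) : z - (starRingEnd ℂ) z = 2 * Complex.I * z.im := by
  apply Complex.ext <;> simp; ring

theorem form_ball {D : ℤ} (hD : 0 < D) {q : ℤ × ℤ × ℤ} (hq : q ∈ QD D) (m : ℕ) (hm : 1 ≤ m)
    (τ : ℂ) (r : ℝ) (hr : 0 < r) (him : ∀ z ∈ Metric.ball τ r, 0 < z.im)
    (hL : ∀ z ∈ Metric.ball τ r, Qell q z ≠ 0) (s : ℝ)
    (hs : ∀ z ∈ Metric.ball τ r, s * |Qell q z| = Qell q z)
    (A : ℕ → ℂ → ℂ) (hA0 : ∀ j, A j τ = 0)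
    (hA : ∀ j, ∀ z ∈ Metric.ball τ r, HasDerivAt (A j) (z ^ j * (Qval q z ^ (m + 1))⁻¹) z) :
    DifferentiableOn ℂ (hpart m D s q A) (Metric.ball τ r) ∧
    ∀ z ∈ Metric.ball τ r, iteratedDeriv (2 * m + 1) (hpart m D s q A) z =
      -c0 m D * (2 * m).factorial * (Qval q z ^ (m + 1))⁻¹ := by
  have hQ : ∀ z ∈ Metric.ball τ r, Qval q z ≠ 0 := fun z hz =>
    norm_pos_iff.1 (form_vfacts hD hq (him z hz) (hL z hz)).1
  have hQτ : Qval q ((starRingEnd ℂ) τ) ≠ 0 := by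
    rw [← Qval_conj]; simpa using hQ τ (Metric.mem_ball_self hr)
  have hD' : (0 : ℝ) < D := by exact_mod_cast hD
  have hκ : (Real.sqrt D * D ^ m : ℝ) ≠ 0 := by
    have := Real.sqrt_pos.2 hD'
    positivity
  have hI : (2 * Complex.I) ^ (2 * m) ≠ 0 := pow_ne_zero _ (by simp)
  have hc0 : c0 m D ≠ 0 := by
    unfold c0
    refine mul_ne_zero (mul_ne_zero (by simp) (by exact_mod_cast hκ)) (inv_ne_zero hI)
  set K : ℂ := -c0 m D * (Qval q ((starRingEnd ℂ) τ) ^ m)⁻¹ with hK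
  have hKne : K ≠ 0 := mul_ne_zero (neg_ne_zero.2 hc0) (inv_ne_zero (pow_ne_zero _ hQτ))
  have hder : ∀ z ∈ Metric.ball τ r, ∃ h', HasDerivAt (hpart m D s q A) h' z ∧
      Qval q z * h' - m * Qder q z * hpart m D s q A z = K * (z - (starRingEnd ℂ) τ) ^ (2 * m) := by
    intro z hz
    obtain ⟨α, hα, hαe⟩ := form_W hD hq (him z hz) (hL z hz) m hm s (hs z hz)
    have h1 := HasW.sum (Finset.range (2 * m + 1)) (z := z) fun j _ =>
      (HasW.of_hasDerivAt ((hasDerivAt_pow j z).const_mul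
        (((2 * m).choose j : ℂ) * (-1) ^ (2 * m - j)))).mul
        (HasW.conj_of_hasDerivAt (hA (2 * m - j) z hz))
    have h2 := hα.sub (h1.const_mul (c0 m D))
    have hβ : Complex.I / 2 * ((Real.sqrt D * D ^ m : ℝ) : ℂ) * (z.im : ℂ) ^ (2 * m) =
        c0 m D * (z - (starRingEnd ℂ) z) ^ (2 * m) := by
      rw [conj_im_id, c0, mul_pow (2 * Complex.I)]; field_simp
    have h3 := (h2.congr_val (β' := 0) rfl (by
      simp only [zero_mul, zero_add, map_mul, map_inv₀, map_pow]
      rw [hβ, ← binom0, mul_assoc, Finset.sum_mul, sub_eq_zero]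
      congr 1
      exact Finset.sum_congr rfl fun j _ => by ring)).hasDerivAt
    refine ⟨_, h3, ?_⟩
    have hE := congrArg (starRingEnd ℂ) (form_E m hm q τ r hr hQ A hA0 hA ((starRingEnd ℂ) z) z hz)
    simp only [map_sum, map_mul, map_sub, map_inv₀, map_pow, map_natCast, Complex.conj_conj,
      map_neg, map_one, ← Qval_conj, ← Qder_conj] at hE
    rw [hβ] at hαe
    simp only [hpart]
    rw [Qval_conj q τ] at hE
    calc _ = (Qval q z * α - m * Qder q z * Gs m D s q z) - c0 m D *
          ∑ j ∈ Finset.range (2 * m + 1), (((2 * m).choose j : ℂ) * (-1) ^ (2 * m - j)) *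
          (Qval q z * (j * z ^ (j - 1)) - m * Qder q z * z ^ j) *
            (starRingEnd ℂ) (A (2 * m - j) z) := by
          simp only [mul_zero, add_zero, mul_sub, sub_mul, Finset.sum_sub_distrib]
          have e1 : Qval q z * (c0 m D * ∑ j ∈ Finset.range (2 * m + 1),
            (((2 * m).choose j : ℂ) * (-1) ^ (2 * m - j)) * (j * z ^ (j - 1)) *
            (starRingEnd ℂ) (A (2 * m - j) z)) = c0 m D * ∑ j ∈ Finset.range (2 * m + 1),
            (((2 * m).choose j : ℂ) * (-1) ^ (2 * m - j)) * (Qval q z * (j * z ^ (j - 1))) *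
            (starRingEnd ℂ) (A (2 * m - j) z) := by
            simp only [Finset.mul_sum]
            exact Finset.sum_congr rfl fun j _ => by ring
          have e2 : m * Qder q z * (c0 m D * ∑ j ∈ Finset.range (2 * m + 1),
            (((2 * m).choose j : ℂ) * (-1) ^ (2 * m - j)) * z ^ j *
            (starRingEnd ℂ) (A (2 * m - j) z)) = c0 m D * ∑ j ∈ Finset.range (2 * m + 1),
            (((2 * m).choose j : ℂ) * (-1) ^ (2 * m - j)) * (m * Qder q z * z ^ j) *
            (starRingEnd ℂ) (A (2 * m - j) z) := by
            simp only [Finset.mul_sum]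
            exact Finset.sum_congr rfl fun j _ => by ring
          rw [e1, e2]
          ring
      _ = _ := by
          rw [hE, hαe, hK]; ring
  have hdiff : DifferentiableOn ℂ (hpart m D s q A) (Metric.ball τ r) := fun z hz => by
    obtain ⟨h', h1, -⟩ := hder z hz
    exact h1.differentiableAt.differentiableWithinAt
  refine ⟨hdiff, fun z hz => ?_⟩
  have hb := bol_main (q.1 : ℂ) (q.2.1 : ℂ) (q.2.2 : ℂ) ((starRingEnd ℂ) τ) τ r hr m
    (h := fun z => K⁻¹ * hpart m D s q A z) (hdiff.const_mul _) hQ (by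
      intro z hz
      obtain ⟨h', h1, h2⟩ := hder z hz
      rw [(h1.const_mul K⁻¹).deriv]
      change Qval q z * (K⁻¹ * h') - m * Qder q z * (K⁻¹ * _) = _
      have : (z - (starRingEnd ℂ) τ) ^ (2 * m) = K⁻¹ * (K * (z - (starRingEnd ℂ) τ) ^ (2 * m)) := by
        field_simp
      rw [this, ← h2]; ring) hz
  rw [iteratedDeriv_const_mul_field] at hb
  change Qval q z ^ (m + 1) * _ = _ * Qval q ((starRingEnd ℂ) τ) ^ m at hb
  have hne := hQ z hz
  have : iteratedDeriv (2 * m + 1) (hpart m D s q A) z = K * (Qval q z ^ (m + 1))⁻¹ *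
      (Qval q z ^ (m + 1) * (K⁻¹ * iteratedDeriv (2 * m + 1) (hpart m D s q A) z)) := by
    field_simp
  rw [this, hb, hK]
  field_simp


theorem iter_tsum {ι : Type*} {h : ι → ℂ → ℂ} {u : ι → ℝ} (hu : Summable u) {U : Set ℂ}
    (hU : IsOpen U) (hh : ∀ i, DifferentiableOn ℂ (h i) U) (hb : ∀ i, ∀ z ∈ U, ‖h i z‖ ≤ u i)
    (n : ℕ) {z : ℂ} (hz : z ∈ U) :
    HasSum (fun i => iteratedDeriv n (h i) z) (iteratedDeriv n (fun w => ∑' i, h i w) z) := by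
  have hs : ∀ (n : ℕ) (t : Finset ι), ∀ z ∈ U, iteratedDeriv n (fun w => ∑ i ∈ t, h i w) z =
      ∑ i ∈ t, iteratedDeriv n (h i) z := by
    intro n t z hz
    refine iteratedDeriv_fun_sum fun i _ => ?_
    exact ((hh i).contDiffOn hU).contDiffAt (hU.mem_nhds hz)
  have key : ∀ n : ℕ, TendstoLocallyUniformlyOn
      (fun (t : Finset ι) => iteratedDeriv n (fun w => ∑ i ∈ t, h i w))
      (iteratedDeriv n (fun w => ∑' i, h i w)) Filter.atTop U := by
    intro n
    induction n with
    | zero =>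
      simp only [iteratedDeriv_zero]
      exact (tendstoUniformlyOn_tsum hu hb).tendstoLocallyUniformlyOn
    | succ n ih =>
      have := ih.deriv (Filter.Eventually.of_forall fun t =>
        diffOn_iter hU (DifferentiableOn.fun_sum fun i _ => hh i) n) hU
      simpa only [iteratedDeriv_succ, Function.comp_def] using this
  have h1 := (key n).tendsto_at hz
  unfold HasSum
  simp only [hs n _ z hz] at h1
  exact h1

theorem main_rep (m : ℕ) (hm : 1 ≤ m) (D : ℤ) (hD : 0 < D) (hDsq : ¬∃ m : ℤ, m ^ 2 = D)
    (S : Set (ℤ × ℤ × ℤ)) (hS : S ⊆ QD D) (τ : ℂ) (hτ : 0 < τ.im)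
    (hτE : ∀ q ∈ QD D, Qell q τ ≠ 0) :
    ∃ r : ℝ, 0 < r ∧ ∃ (H : ℂ → ℂ) (AA : ℕ → ℂ → ℂ) (f : ℂ → ℂ),
      DifferentiableOn ℂ H (Metric.ball τ r) ∧ (∀ j, AA j τ = 0) ∧
      (∀ j, ∀ z ∈ Metric.ball τ r, HasDerivAt (AA j) (z ^ j * f z) z) ∧
      (f = fun z => ∑' q : S, (Qval (q : ℤ × ℤ × ℤ) z ^ (m + 1))⁻¹) ∧
      iteratedDeriv (2 * m + 1) H τ = -c0 m D * (2 * m).factorial * f τ ∧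
      ∀ z ∈ Metric.ball τ r, ∑' q : S, Fsummand (m + 1) D z (q : ℤ × ℤ × ℤ) =
        H z + c0 m D * ∑ j ∈ Finset.range (2 * m + 1),
          (((2 * m).choose j : ℂ) * (-1) ^ (2 * m - j)) * z ^ j *
            (starRingEnd ℂ) (AA (2 * m - j) z) := by
  obtain ⟨δ, r, hδ, hr, hgeo⟩ := aux_geometry hD hDsq τ hτ hτE
  refine ⟨r, hr, ?_⟩
  have hball : IsOpen (Metric.ball τ r) := Metric.isOpen_ball
  have hpre : IsPreconnected (Metric.ball τ r) := (convex_ball τ r).isPreconnected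
  have hNq : ∀ q ∈ S, 0 < Nq q := by
    intro q hq
    have := aux_Nq_ge hDsq (hS hq)
    have h0 := abs_nonneg (q.2.1 : ℝ)
    linarith
  set u : S → ℝ := fun q => ((δ * Nq q) ^ (m + 1))⁻¹ with hu
  have hus : Summable u := by
    have := (aux_summable_k hD hDsq (m + 1) (by omega) S hS).mul_left ((δ ^ (m + 1))⁻¹)
    refine this.congr fun q => ?_
    simp only [hu, mul_pow, mul_inv]
  have hu0 : ∀ q, 0 ≤ u q := fun q => by
    have := hNq q q.2
    simp only [hu]; positivity
  have hell : ∀ q : S, ∀ z ∈ Metric.ball τ r, (|Qell q z| ^ (m + 1))⁻¹ ≤ u q := by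
    intro q z hz
    have h1 := ((hgeo z hz).2 q (hS q.2)).1
    have h2 := mul_pos hδ (hNq q q.2)
    simp only [hu]
    gcongr
  have him : ∀ z ∈ Metric.ball τ r, 0 < z.im := fun z hz => (hgeo z hz).1
  have hL : ∀ q : S, ∀ z ∈ Metric.ball τ r, Qell q z ≠ 0 := by
    intro q z hz
    have h1 := ((hgeo z hz).2 q (hS q.2)).1
    have h2 := mul_pos hδ (hNq q q.2)
    exact abs_pos.1 (lt_of_lt_of_le h2 h1)
  have hQb : ∀ q : S, ∀ z ∈ Metric.ball τ r, ‖(Qval q z ^ (m + 1))⁻¹‖ ≤ u q := by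
    intro q z hz
    refine le_trans ?_ (hell q z hz)
    have h1 := abs_pos.2 (hL q z hz)
    have h2 := aux_norm_ge hD (hS q.2) z
    rw [norm_inv, norm_pow]
    gcongr
  have hQ : ∀ q : S, ∀ z ∈ Metric.ball τ r, Qval q z ≠ 0 := fun q z hz =>
    norm_pos_iff.1 (form_vfacts hD (hS q.2) (him z hz) (hL q z hz)).1
  set R : ℝ := ‖τ‖ + r with hR
  have hR0 : 0 < R := by positivity
  have hzR : ∀ z ∈ Metric.ball τ r, ‖z‖ ≤ R := by
    intro z hz
    have h1 : ‖z - τ‖ < r := by rwa [← dist_eq_norm]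
    have h2 : ‖z‖ ≤ ‖z - τ‖ + ‖τ‖ := by simpa using norm_add_le (z - τ) τ
    rw [hR]; linarith
  -- signs
  set s : S → ℝ := fun q => Real.sign (Qell q τ) with hsdef
  have hs : ∀ q : S, ∀ z ∈ Metric.ball τ r, s q * |Qell q z| = Qell q z := by
    intro q z hz
    simp only [hsdef]
    rw [← ((hgeo z hz).2 q (hS q.2)).2]
    rcases lt_trichotomy (Qell q z) 0 with h | h | h
    · rw [Real.sign_of_neg h, abs_of_neg h]; ring
    · rw [h]; simp
    · rw [Real.sign_of_pos h, abs_of_pos h]; ring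
  have hs1 : ∀ q : S, |s q| ≤ 1 := by
    intro q
    rcases Real.sign_apply_eq (Qell q τ) with h | h | h <;> simp [hsdef, h]
  -- primitives
  have hprim : ∀ (q : S) (j : ℕ), ∃ φ : ℂ → ℂ, φ τ = 0 ∧ ∀ z ∈ Metric.ball τ r,
      HasDerivAt φ (z ^ j * (Qval q z ^ (m + 1))⁻¹) z := by
    intro q j
    have hd : DifferentiableOn ℂ (fun z : ℂ => z ^ j * (Qval q z ^ (m + 1))⁻¹)
        (Metric.ball τ r) := by
      intro z hz
      exact ((hasDerivAt_pow j z).mul (((Qval_hasDerivAt q z).fun_pow (m + 1)).fun_inv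
        (pow_ne_zero _ (hQ q z hz)))).differentiableAt.differentiableWithinAt
    exact (hd.isExactOn_ball).with_val_at τ 0
  choose A hA0 hA using hprim
  have hA'b : ∀ (j : ℕ) (q : S), ∀ z ∈ Metric.ball τ r,
      ‖z ^ j * (Qval q z ^ (m + 1))⁻¹‖ ≤ R ^ j * u q := by
    intro j q z hz
    rw [norm_mul, norm_pow]
    have h1 := hzR z hz
    have h2 := hQb q z hz
    gcongr
  have hAb : ∀ (j : ℕ) (q : S), ∀ z ∈ Metric.ball τ r, ‖A q j z‖ ≤ R ^ j * u q * r := by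
    intro j q z hz
    have h1 := Convex.norm_image_sub_le_of_norm_hasDerivWithin_le
      (fun x hx => (hA q j x hx).hasDerivWithinAt) (hA'b j q) (convex_ball τ r)
      (Metric.mem_ball_self hr) hz
    rw [hA0, sub_zero] at h1
    have h2 : ‖z - τ‖ < r := by rwa [← dist_eq_norm]
    have h3 := hu0 q
    exact h1.trans (by gcongr)
  have hAsum : ∀ (j : ℕ), ∀ z ∈ Metric.ball τ r, Summable (fun q => A q j z) := by
    intro j z hz
    exact Summable.of_norm_bounded ((hus.mul_left (R ^ j)).mul_right r) fun q => hAb j q z hz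
  -- holomorphic parts
  set h : S → ℂ → ℂ := fun q => hpart m D (s q) q (A q) with hh
  have hform : ∀ q : S, _ := fun q => form_ball hD (hS q.2) m hm τ r hr him (hL q) (s q) (hs q)
    (A q) (hA0 q) (hA q)
  set C : ℝ := (D : ℝ) ^ m * Real.sqrt D * R ^ (2 * m + 1) + ‖c0 m D‖ *
    ∑ j ∈ Finset.range (2 * m + 1), ‖(((2 * m).choose j : ℂ) * (-1) ^ (2 * m - j))‖ * R ^ j *
      (R ^ (2 * m - j) * r) with hC
  have hhb : ∀ q : S, ∀ z ∈ Metric.ball τ r, ‖h q z‖ ≤ C * u q := by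
    intro q z hz
    have hD' : (0 : ℝ) < D := by exact_mod_cast hD
    simp only [hh, hpart]
    refine (norm_sub_le _ _).trans ?_
    rw [hC, add_mul]
    refine add_le_add ?_ ?_
    · refine (form_bound hD (hS q.2) (him z hz) (hL q z hz) m hm (s q) (hs1 q)).trans ?_
      have h1 := hell q z hz
      have h2 : z.im ≤ R := ((le_abs_self _).trans (Complex.abs_im_le_norm z)).trans (hzR z hz)
      have h3 := (him z hz).le
      gcongr
    · rw [norm_mul, mul_assoc]
      refine mul_le_mul_of_nonneg_left ?_ (norm_nonneg _)
      refine (norm_sum_le _ _).trans ?_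
      rw [Finset.sum_mul]
      refine Finset.sum_le_sum fun j _ => ?_
      rw [norm_mul, norm_mul _ (z ^ j), norm_pow z, RCLike.norm_conj]
      have h1 := hzR z hz
      have h2 := hAb (2 * m - j) q z hz
      calc _ ≤ ‖(((2 * m).choose j : ℂ) * (-1) ^ (2 * m - j))‖ * R ^ j *
            (R ^ (2 * m - j) * u q * r) := by gcongr
        _ = _ := by ring
  have hhs : Summable (fun q => C * u q) := hus.mul_left C
  refine ⟨fun z => ∑' q, h q z, fun j z => ∑' q, A q j z,
    fun z => ∑' q : S, (Qval (q : ℤ × ℤ × ℤ) z ^ (m + 1))⁻¹, ?_, ?_, ?_, rfl, ?_, ?_⟩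
  · exact Complex.differentiableOn_tsum_of_summable_norm hhs (fun q => (hform q).1) hball hhb
  · intro j
    simp [hA0]
  · intro j z hz
    have := hasDerivAt_tsum_of_isPreconnected (hus.mul_left (R ^ j)) hball hpre
      (fun q z hz => hA q j z hz) (fun q z hz => hA'b j q z hz) (Metric.mem_ball_self hr)
      (hAsum j τ (Metric.mem_ball_self hr)) hz
    rwa [tsum_mul_left] at this
  · have h1 := iter_tsum hhs hball (fun q => (hform q).1) hhb (2 * m + 1) (Metric.mem_ball_self hr)
    rw [← h1.tsum_eq, ← tsum_mul_left]
    exact tsum_congr fun q => (hform q).2 τ (Metric.mem_ball_self hr)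
  · intro z hz
    have h1 : ∀ q : S, Fsummand (m + 1) D z q = h q z + c0 m D * ∑ j ∈ Finset.range (2 * m + 1),
          (((2 * m).choose j : ℂ) * (-1) ^ (2 * m - j)) * z ^ j *
            (starRingEnd ℂ) (A q (2 * m - j) z) := by
      intro q
      simp only [hh, hpart, Gs, Fsummand, hsdef, ← ((hgeo z hz).2 q (hS q.2)).2,
        Nat.add_sub_cancel]
      ring
    have h2 : HasSum (fun q => h q z) (∑' q, h q z) :=
      (Summable.of_norm_bounded hhs fun q => hhb q z hz).hasSum
    have h3 : ∀ j, HasSum (fun q => (starRingEnd ℂ) (A q j z))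
        ((starRingEnd ℂ) (∑' q, A q j z)) := fun j =>
      (hAsum j z hz).hasSum.map (starRingEnd ℂ) Complex.continuous_conj
    have h4 := h2.add ((hasSum_sum (s := Finset.range (2 * m + 1)) fun j _ =>
      (h3 (2 * m - j)).mul_left ((((2 * m).choose j : ℂ) * (-1) ^ (2 * m - j)) * z ^ j)).mul_left
        (c0 m D))
    rw [tsum_congr h1]
    exact h4.tsum_eq


theorem stmt4 (k : ℕ) (hk : 2 ≤ k) (D : ℤ) (hD : 0 < D)
    (hD4 : D % 4 = 0 ∨ D % 4 = 1) (hDsq : ¬∃ m : ℤ, m ^ 2 = D)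
    (𝒜 : Set (ℤ × ℤ × ℤ)) (h𝒜 : IsNarrowClass D 𝒜)
    (τ : ℂ) (hτ : 0 < τ.im) (hτE : ∀ q ∈ QD D, Qell q τ ≠ 0) :
    xiOp k (FA k D 𝒜) τ = Dpow D (1 / 2 - (k : ℝ)) * fA k D 𝒜 τ ∧
    (Dop^[2 * k - 1] (FA k D 𝒜)) τ =
      -Dpow D (1 / 2 - (k : ℝ)) *
        ((Nat.factorial (2 * k - 2) : ℂ) / (((4 * Real.pi) ^ (2 * k - 1) : ℝ) : ℂ)) *
        fA k D 𝒜 τ ∧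
    DeltaOp k (FA k D 𝒜) τ = 0 := by
  obtain ⟨m, rfl⟩ : ∃ m, k = m + 1 := ⟨k - 1, by omega⟩
  have hm : 1 ≤ m := by omega
  obtain ⟨r, hr, H, AA, f, hH, hAA0, hAA, hf, hiter, hrep⟩ :=
    main_rep m hm D hD hDsq 𝒜 (aux_class_subset h𝒜) τ hτ hτE
  have hD' : (0 : ℝ) < D := by exact_mod_cast hD
  set N : ℝ := (Nat.choose (2 * (m + 1) - 2) (m + 1 - 1) : ℝ) * Real.pi with hN
  set P : ℂ := Dpow D (1 / 2 - ((m + 1 : ℕ) : ℝ)) with hP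
  set Cst : ℂ := (-1 : ℂ) ^ (m + 1) * P / (N : ℂ) with hCst
  have hκ : Dpow D (((m + 1 : ℕ) : ℝ) - 1 / 2) = ((Real.sqrt D * (D : ℝ) ^ m : ℝ) : ℂ) := by
    unfold Dpow
    congr 1
    rw [Real.sqrt_eq_rpow, ← Real.rpow_natCast, ← Real.rpow_add hD']
    congr 1
    push_cast; ring
  set κ : ℂ := ((Real.sqrt D * (D : ℝ) ^ m : ℝ) : ℂ) with hκdef
  have hκc : (starRingEnd ℂ) κ = κ := by rw [hκdef]; exact Complex.conj_ofReal _
  have hCc : (starRingEnd ℂ) Cst = Cst := by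
    rw [hCst, hP]; unfold Dpow
    simp only [map_div₀, map_mul, map_pow, map_neg, map_one, Complex.conj_ofReal]
  have hc0 : c0 m D = Complex.I / 2 * κ * ((2 * Complex.I) ^ (2 * m))⁻¹ := rfl
  have hfA : P * fA (m + 1) D 𝒜 τ = Cst * κ * f τ := by
    unfold fA
    rw [hκ, hf, hCst]
    simp only [zpow_neg, zpow_natCast]
    ring
  have hI := Complex.I_ne_zero
  have hI2 : (2 * Complex.I) ≠ 0 := by simp
  have hy : (τ.im : ℂ) ≠ 0 := by exact_mod_cast hτ.ne'
  have hc0' : c0 m D * (2 * Complex.I) ^ (2 * m) = Complex.I / 2 * κ := by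
    rw [hc0]; field_simp
  set c : ℕ → ℂ := fun j => ((2 * m).choose j : ℂ) * (-1) ^ (2 * m - j) with hc
  let h : Option ℕ → ℂ → ℂ := fun o => match o with
    | none => fun z => Cst * H z
    | some j => fun z => Cst * c0 m D * c j * z ^ j
  let A : Option ℕ → ℂ → ℂ := fun o => match o with
    | none => fun _ => 1
    | some j => AA (2 * m - j)
  set s : Finset (Option ℕ) := Finset.insertNone (Finset.range (2 * m + 1)) with hs
  have hU : IsOpen (Metric.ball τ r) := Metric.isOpen_ball
  have hτU : τ ∈ Metric.ball τ r := Metric.mem_ball_self hr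
  have hh : ∀ i, DifferentiableOn ℂ (h i) (Metric.ball τ r) := by
    rintro (_ | j)
    · exact hH.const_mul Cst
    · exact ((differentiable_id.pow j).const_mul _).differentiableOn
  have hA : ∀ i, DifferentiableOn ℂ (A i) (Metric.ball τ r) := by
    rintro (_ | j)
    · exact differentiableOn_const 1
    · exact fun z hz => (hAA _ z hz).differentiableAt.differentiableWithinAt
  have hG : ∀ z ∈ Metric.ball τ r, FA (m + 1) D 𝒜 z =
      ∑ i ∈ s, h i z * (starRingEnd ℂ) (A i z) := by
    intro z hz
    unfold FA
    rw [hrep z hz, hs, Finset.sum_insertNone]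
    change Cst * _ = Cst * H z * (starRingEnd ℂ) 1 + ∑ j ∈ Finset.range (2 * m + 1),
      Cst * c0 m D * c j * z ^ j * (starRingEnd ℂ) (AA (2 * m - j) z)
    rw [mul_add, map_one, mul_one, Finset.mul_sum, Finset.mul_sum]
    congr 1
    exact Finset.sum_congr rfl fun j _ => by simp only [hc]; ring
  have hdA0 : ∀ z, deriv (A none) z = 0 := fun z => deriv_const z 1
  have hdA : ∀ j, deriv (A (some j)) τ = τ ^ (2 * m - j) * f τ := fun j =>
    (hAA (2 * m - j) τ hτU).deriv
  have hdh : ∀ j, deriv (h (some j)) τ = Cst * c0 m D * c j * (j * τ ^ (j - 1)) := fun j =>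
    ((hasDerivAt_pow j τ).const_mul _).deriv
  have e1 : ∑ i ∈ s, h i τ * (starRingEnd ℂ) (deriv (A i) τ) =
      Cst * (Complex.I / 2 * κ) * (τ.im : ℂ) ^ (2 * m) * (starRingEnd ℂ) (f τ) := by
    rw [hs, Finset.sum_insertNone, hdA0, map_zero, mul_zero, zero_add]
    simp only [hdA, map_mul, map_pow]
    have : ∀ j ∈ Finset.range (2 * m + 1), h (some j) τ *
        ((starRingEnd ℂ) τ ^ (2 * m - j) * (starRingEnd ℂ) (f τ)) =
        (Cst * c0 m D * (starRingEnd ℂ) (f τ)) * ((((2 * m).choose j : ℂ) * (-1) ^ (2 * m - j)) *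
          τ ^ j * (starRingEnd ℂ) τ ^ (2 * m - j)) := fun j _ => by
      change Cst * c0 m D * c j * τ ^ j * _ = _
      simp only [hc]; ring
    rw [Finset.sum_congr rfl this, ← Finset.mul_sum, binom0, conj_im_id, mul_pow, ← hc0']
    ring
  have e2 : ∑ i ∈ s, deriv (h i) τ * (starRingEnd ℂ) (deriv (A i) τ) =
      Cst * c0 m D * (starRingEnd ℂ) (f τ) *
        ((2 * m : ℕ) * (2 * Complex.I * τ.im) ^ (2 * m - 1)) := by
    rw [hs, Finset.sum_insertNone, hdA0, map_zero, mul_zero, zero_add]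
    simp only [hdA, hdh, map_mul, map_pow]
    have : ∀ j ∈ Finset.range (2 * m + 1), Cst * c0 m D * c j * (j * τ ^ (j - 1)) *
        ((starRingEnd ℂ) τ ^ (2 * m - j) * (starRingEnd ℂ) (f τ)) =
        (Cst * c0 m D * (starRingEnd ℂ) (f τ)) * ((((2 * m).choose j : ℂ) * (-1) ^ (2 * m - j)) *
          (j * τ ^ (j - 1)) * (starRingEnd ℂ) τ ^ (2 * m - j)) := fun j _ => by
      simp only [hc]; ring
    rw [Finset.sum_congr rfl this, ← Finset.mul_sum, binom1, conj_im_id]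
  have hW := W1 s hU hh hA hG hτU
  rw [e1] at hW
  refine ⟨?_, ?_, ?_⟩
  · rw [hfA]
    unfold xiOp
    rw [hW.wirDbar_eq]
    simp only [map_mul, map_pow, map_div₀, hCc, hκc, Complex.conj_I, Complex.conj_ofReal,
      Complex.conj_conj, map_ofNat]
    have hz : (τ.im : ℂ) ^ ((2 : ℤ) - 2 * ((m + 1 : ℕ) : ℤ)) = ((τ.im : ℂ) ^ (2 * m))⁻¹ := by
      rw [← zpow_natCast, ← zpow_neg]
      congr 1
      push_cast; ring
    rw [hz]
    field_simp
    linear_combination (-Cst * κ * f τ) * Complex.I_sq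
  · have h2 := W2 s hU hh hA hG (2 * m + 1) τ hτU
    have en : 2 * (m + 1) - 1 = 2 * m + 1 := by omega
    have en2 : 2 * (m + 1) - 2 = 2 * m := by omega
    rw [en, en2, h2, hs, Finset.sum_insertNone]
    have hz0 : ∑ j ∈ Finset.range (2 * m + 1), iteratedDeriv (2 * m + 1) (h (some j)) τ *
        (starRingEnd ℂ) (A (some j) τ) = 0 := by
      refine Finset.sum_eq_zero fun j _ => ?_
      change _ * (starRingEnd ℂ) (AA (2 * m - j) τ) = 0
      rw [hAA0, map_zero, mul_zero]
    have hn0 : iteratedDeriv (2 * m + 1) (h none) τ = Cst * iteratedDeriv (2 * m + 1) H τ := by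
      change iteratedDeriv (2 * m + 1) (fun z => Cst * H z) τ = _
      exact iteratedDeriv_const_mul_field _ _
    have hA1 : A none τ = 1 := rfl
    rw [hz0, hn0, hA1, map_one, mul_one, add_zero, hiter]
    have hpi : (Real.pi : ℂ) ≠ 0 := by exact_mod_cast Real.pi_ne_zero
    have hI4 : Complex.I ^ (4 * m) = 1 := by rw [pow_mul, Complex.I_pow_four, one_pow]
    have key : (1 / (2 * (Real.pi : ℂ) * Complex.I)) ^ (2 * m + 1) * c0 m D =
        κ / (4 * (Real.pi : ℂ)) ^ (2 * m + 1) := by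
      rw [hc0, one_div, inv_pow]
      have : (4 * (Real.pi : ℂ)) ^ (2 * m + 1) * Complex.I =
          (2 * (Real.pi : ℂ) * Complex.I) ^ (2 * m + 1) * (2 * (2 * Complex.I) ^ (2 * m)) := by
        have e4 : (4 : ℂ) = 2 * 2 := by norm_num
        rw [e4]
        simp only [mul_pow, pow_succ]
        have : Complex.I ^ (2 * m) * Complex.I ^ (2 * m) = 1 := by
          rw [← pow_add, ← hI4]; congr 1; ring
        linear_combination (-(2 : ℂ) ^ (2 * m) * 2 ^ (2 * m) * Real.pi ^ (2 * m) * Real.pi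
          * 4 * Complex.I) * this
      rw [eq_div_iff (pow_ne_zero _ (by simp [hpi]))]
      have hx : (2 * (Real.pi : ℂ) * Complex.I) ^ (2 * m + 1) ≠ 0 :=
        pow_ne_zero _ (by simp [hpi])
      have hx2 : (2 * Complex.I) ^ (2 * m) ≠ 0 := pow_ne_zero _ hI2
      generalize (2 * (Real.pi : ℂ) * Complex.I) ^ (2 * m + 1) = X at *
      generalize (2 * Complex.I) ^ (2 * m) = Y at *
      generalize (4 * (Real.pi : ℂ)) ^ (2 * m + 1) = Z at *
      field_simp
      linear_combination κ * this
    push_cast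
    linear_combination (-Cst * (2 * m).factorial * f τ) * key +
      ((2 * m).factorial / (4 * (Real.pi : ℂ)) ^ (2 * m + 1)) * hfA
  · unfold DeltaOp
    have hb := hW.wirDbar_eq
    unfold wirDbar at hb
    rw [div_eq_iff (two_ne_zero)] at hb
    rw [W3 s hU hh hA hG hτU, e2, hb, ← hc0']
    obtain ⟨n, rfl⟩ : ∃ n, m = n + 1 := ⟨m - 1, by omega⟩
    have en : 2 * (n + 1) - 1 = 2 * n + 1 := by omega
    rw [en]
    push_cast
    linear_combination (-16 * (τ.im : ℂ) ^ 3 * (τ.im : ℂ) ^ (2 * n) * Cst * c0 (n + 1) D *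
      (starRingEnd ℂ) (f τ) * (n + 1) * Complex.I * Complex.I ^ (2 * n) * 2 ^ (2 * n)) *
        Complex.I_sq
end
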